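/- arXiv:1402.3752 — 9 statements merged into one kernel-verified Lean document; each statement's English description precedes it below -/
import Mathlib

section
/- If x_0 > 0 and x_k > 0, then the Multivariate Juggling Markov Chain is irreducible: for any two states A, B in St_{h,k} there exists an integer n ≥ 0 such that the (A,B) entry of the n-th power of the transition matrix P is strictly positive. -/
/-!
Two kinds of transition suffice. When a word has exactly `k` letters `∘`, the transition of weight
`x k` (from a word starting with `•`) and the forced transition (from a word starting with `∘`)
both send the word to its rotation by one letter, because the last of the `k + 1` occurrences of
`∘` in `a₂⋯a_h∘` is the appended one. Hence any two rotations of such a word communicate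
(`reach_of_isRotated`). The transition of weight `x 0` sends `•∘v` to `•v∘`, a rotation of `∘•v`;
conjugating by rotations, a ball can hop over an empty site on its right anywhere in the word,
`u•∘v → u∘•v` (`reach_of_hop`).

Hops alone lead from any word to `∘⋯∘•⋯•` (`hops_to_sorted`) and from `•⋯•∘⋯∘` to any word
(`hops_from_sorted`). Those two extreme words are rotations of one another, so
`A → ∘⋯∘•⋯• → •⋯•∘⋯∘ → B`. Since the transition matrix has nonnegative entries, a path of
transitions of positive probability gives a positive entry of a power (`exists_pow_pos`).
-/

/-- Replace the `(i+1)`-th occurrence of `false` (i.e. `∘`), 0-indexed `i`, reading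
from the left, by `true` (i.e. `•`). -/
def fillAt : ℕ → List Bool → List Bool
  | _, [] => []
  | i, true :: rest => true :: fillAt i rest
  | 0, false :: rest => true :: rest
  | (i+1), false :: rest => false :: fillAt i rest

/-- Transition probability of the MJMC, on words encoded as lists of booleans
(`true` = ball `•`, `false` = empty site `∘`).  From `A = a₁⋯a_h`: with probability 1
go to `a₂⋯a_h∘` if `a₁ = ∘`; with probability `x i` go to `T_i (a₂⋯a_h∘)` if `a₁ = •`. -/
noncomputable def mjmcP (k : ℕ) (x : ℕ → ℝ) : List Bool → List Bool → ℝ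
  | [], B => if B = [] then 1 else 0
  | false :: rest, B => if B = rest ++ [false] then 1 else 0
  | true :: rest, B =>
      ∑ i ∈ Finset.range (k + 1), if B = fillAt i (rest ++ [false]) then x i else 0

/-- Auxiliary weight: `e` records the number of `∘`'s seen so far, so that the factor
attached to a `•` at position `i` is `x_{E_i(B)} + ⋯ + x_k`. -/
noncomputable def wordWeightAux (k : ℕ) (x : ℕ → ℝ) : ℕ → List Bool → ℝ
  | _, [] => 1
  | e, false :: rest => wordWeightAux k x (e + 1) rest
  | e, true :: rest => (∑ j ∈ Finset.Icc e k, x j) * wordWeightAux k x e rest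

/-- `w(B) = ∏_{i : b_i = •} (x_{E_i(B)} + ⋯ + x_k)` where `E_i(B) = #{j < i : b_j = ∘}`. -/
noncomputable def wordWeight (k : ℕ) (x : ℕ → ℝ) (B : List Bool) : ℝ :=
  wordWeightAux k x 0 B

/-- The set `St_{h,k}` of words of length `h` with exactly `k` occurrences of `∘`. -/
def stWords (h k : ℕ) : Finset (Fin h → Bool) :=
  Finset.univ.filter (fun B => (List.ofFn B).count false = k)

/-- The normalization factor `Z_{h,k}(x_0,…,x_k) = ∑_{B ∈ St_{h,k}} w(B)`. -/
noncomputable def Zword (h k : ℕ) (x : ℕ → ℝ) : ℝ :=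
  ∑ B ∈ stWords h k, wordWeight k x (List.ofFn B)

/-- The transition matrix of the MJMC, viewed as a matrix on all words of length `h`
(rows/columns outside `St_{h,k}` are irrelevant: starting from a state of `St_{h,k}`
all transitions stay in `St_{h,k}`). -/
noncomputable def mjmcM (h k : ℕ) (x : ℕ → ℝ) :
    Matrix (Fin h → Bool) (Fin h → Bool) ℝ :=
  Matrix.of fun A B => mjmcP k x (List.ofFn A) (List.ofFn B)

open Relation

/-- A transition of positive probability, between words of the same length. -/
def MStep (k : ℕ) (x : ℕ → ℝ) (l l' : List Bool) : Prop :=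
  0 < mjmcP k x l l' ∧ l'.length = l.length

/-- A ball hops over the empty site immediately to its right: `u•∘v → u∘•v`. -/
def Hop (l l' : List Bool) : Prop :=
  ∃ u v, l = u ++ true :: false :: v ∧ l' = u ++ false :: true :: v

lemma mjmcP_nonneg (k : ℕ) (x : ℕ → ℝ) (hx : ∀ i, 0 ≤ x i) (l l' : List Bool) :
    0 ≤ mjmcP k x l l' := by
  rcases l with _ | ⟨_ | _, l⟩
  · simp only [mjmcP]; split_ifs <;> norm_num
  · simp only [mjmcP]; split_ifs <;> norm_num
  · simp only [mjmcP]
    refine Finset.sum_nonneg fun i _ => ?_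
    split_ifs
    exacts [hx i, le_rfl]

lemma mjmcP_fillAt_pos (k : ℕ) (x : ℕ → ℝ) (hx : ∀ i, 0 ≤ x i) (l : List Bool) (i : ℕ)
    (hi : i ≤ k) (hxi : 0 < x i) : 0 < mjmcP k x (true :: l) (fillAt i (l ++ [false])) := by
  simp only [mjmcP]
  refine Finset.sum_pos' (fun j _ => ?_) ⟨i, by simp; omega, by simpa using hxi⟩
  split_ifs
  exacts [hx j, le_rfl]

lemma fillAt_count (l : List Bool) :
    fillAt (l.count false) (l ++ [false]) = l ++ [true] := by
  induction l with
  | nil => simp [fillAt]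
  | cons a l ih => cases a <;> simp [fillAt, ih]

lemma mstep_rotate (k : ℕ) (x : ℕ → ℝ) (hx : ∀ i, 0 ≤ x i) (hxk : 0 < x k)
    (a : Bool) (l : List Bool) (hc : (a :: l).count false = k) :
    MStep k x (a :: l) (l ++ [a]) := by
  refine ⟨?_, by simp⟩
  cases a with
  | false => simp [mjmcP]
  | true =>
    have hl : l.count false = k := by simpa using hc
    have h := mjmcP_fillAt_pos k x hx l k le_rfl hxk
    rwa [← hl, fillAt_count, hl] at h

lemma reach_of_isRotated (k : ℕ) (x : ℕ → ℝ) (hx : ∀ i, 0 ≤ x i) (hxk : 0 < x k)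
    (l l' : List Bool) (hc : l.count false = k) (hr : l ~r l') :
    ReflTransGen (MStep k x) l l' := by
  obtain ⟨n, rfl⟩ := hr
  induction n generalizing l with
  | zero => simpa using ReflTransGen.refl
  | succ n ih =>
    cases l with
    | nil => simpa using ReflTransGen.refl
    | cons a l =>
      rw [List.rotate_cons_succ]
      refine ReflTransGen.head (mstep_rotate k x hx hxk a l hc) (ih _ ?_)
      rw [← hc]
      exact (List.perm_append_singleton a l).count_eq false

lemma Hop.count_eq {l l' : List Bool} (h : Hop l l') : l'.count false = l.count false := by
  obtain ⟨u, v, rfl, rfl⟩ := h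
  simp

lemma hops_count_eq {l l' : List Bool} (h : ReflTransGen Hop l l') :
    l'.count false = l.count false := by
  induction h with
  | refl => rfl
  | tail _ h ih => rw [h.count_eq, ih]

/-- A hop is realised by rotating the hopping ball to the front, making the transition of weight
`x 0`, and rotating back. -/
lemma reach_of_hop (k : ℕ) (x : ℕ → ℝ) (hx : ∀ i, 0 ≤ x i) (hx0 : 0 < x 0) (hxk : 0 < x k)
    (l l' : List Bool) (hc : l.count false = k) (hl : Hop l l') :
    ReflTransGen (MStep k x) l l' := by
  have hc' := hl.count_eq
  obtain ⟨u, v, rfl, rfl⟩ := hl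
  have h1 : ReflTransGen (MStep k x) (u ++ true :: false :: v) (true :: false :: v ++ u) :=
    reach_of_isRotated k x hx hxk _ _ hc List.isRotated_append
  have h2 : MStep k x (true :: false :: v ++ u) (true :: (v ++ u) ++ [false]) := by
    refine ⟨?_, by simp; omega⟩
    simpa [fillAt] using mjmcP_fillAt_pos k x hx (false :: (v ++ u)) 0 (Nat.zero_le k) hx0
  have h3 : (true :: (v ++ u) ++ [false]) ~r (u ++ false :: true :: v) := by
    have e1 : (true :: (v ++ u) ++ [false]) ~r ([false] ++ true :: (v ++ u)) :=
      List.isRotated_append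
    have e2 : ((false :: true :: v) ++ u) ~r (u ++ false :: true :: v) := List.isRotated_append
    exact e1.trans e2
  refine (h1.tail h2).trans (reach_of_isRotated k x hx hxk _ _ ?_ h3)
  rw [← hc, ← hc']
  exact h3.perm.count_eq false

lemma reach_of_hops (k : ℕ) (x : ℕ → ℝ) (hx : ∀ i, 0 ≤ x i) (hx0 : 0 < x 0) (hxk : 0 < x k)
    (l l' : List Bool) (hc : l.count false = k) (h : ReflTransGen Hop l l') :
    ReflTransGen (MStep k x) l l' := by
  induction h with
  | refl => exact .refl
  | tail h hs ih =>
    exact ih.trans (reach_of_hop k x hx hx0 hxk _ _ ((hops_count_eq h).trans hc) hs)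

lemma hops_cons (a : Bool) {l l' : List Bool} (h : ReflTransGen Hop l l') :
    ReflTransGen Hop (a :: l) (a :: l') :=
  h.lift (List.cons a) fun _ _ ⟨u, v, e, e'⟩ => ⟨a :: u, v, by simp [e], by simp [e']⟩

lemma hops_ball_over_empties (a : ℕ) (w : List Bool) :
    ReflTransGen Hop (true :: (List.replicate a false ++ w))
      (List.replicate a false ++ true :: w) := by
  induction a with
  | zero => exact .refl
  | succ a ih => exact ReflTransGen.head ⟨[], _, rfl, rfl⟩ (hops_cons false ih)

lemma hops_balls_over_empty (b : ℕ) (w : List Bool) :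
    ReflTransGen Hop (List.replicate b true ++ false :: w)
      (false :: (List.replicate b true ++ w)) := by
  induction b with
  | zero => exact .refl
  | succ b ih => exact (hops_cons true ih).tail ⟨[], _, rfl, rfl⟩

lemma hops_to_sorted (l : List Bool) :
    ReflTransGen Hop l
      (List.replicate (l.count false) false ++ List.replicate (l.count true) true) := by
  induction l with
  | nil => exact .refl
  | cons a l ih =>
    cases a with
    | false => simpa [List.replicate_succ] using hops_cons false ih
    | true =>
      simpa [List.replicate_succ] using (hops_cons true ih).trans (hops_ball_over_empties _ _)

lemma hops_from_sorted (l : List Bool) :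
    ReflTransGen Hop
      (List.replicate (l.count true) true ++ List.replicate (l.count false) false) l := by
  induction l with
  | nil => exact .refl
  | cons a l ih =>
    cases a with
    | true => simpa [List.replicate_succ] using hops_cons true ih
    | false =>
      simpa [List.replicate_succ] using (hops_balls_over_empty _ _).trans (hops_cons false ih)

lemma mjmcM_pow_nonneg (h k : ℕ) (x : ℕ → ℝ) (hx : ∀ i, 0 ≤ x i) (n : ℕ)
    (A B : Fin h → Bool) : 0 ≤ (mjmcM h k x ^ n) A B := by
  induction n generalizing B with
  | zero => rw [pow_zero, Matrix.one_apply]; split_ifs <;> norm_num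
  | succ n ih =>
    rw [pow_succ, Matrix.mul_apply]
    exact Finset.sum_nonneg fun C _ => mul_nonneg (ih C) (mjmcP_nonneg k x hx _ _)

/-- A path of positive-probability transitions starting at a word of length `h` stays among the
words of length `h`, and makes the corresponding entry of a power of the matrix positive. -/
lemma exists_pow_pos (h k : ℕ) (x : ℕ → ℝ) (hx : ∀ i, 0 ≤ x i) (A : Fin h → Bool)
    (l : List Bool) (hr : ReflTransGen (MStep k x) (List.ofFn A) l) :
    ∃ (B : Fin h → Bool) (n : ℕ), List.ofFn B = l ∧ 0 < (mjmcM h k x ^ n) A B := by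
  induction hr with
  | refl => exact ⟨A, 0, rfl, by simp⟩
  | @tail l l' _ hs ih =>
    obtain ⟨B, n, rfl, hpos⟩ := ih
    obtain ⟨hp, hlen⟩ := hs
    have hlen' : l'.length = h := by simpa using hlen
    subst hlen'
    refine ⟨l'.get, n + 1, List.ofFn_get l', ?_⟩
    rw [pow_succ, Matrix.mul_apply]
    refine Finset.sum_pos' (fun C _ => mul_nonneg (mjmcM_pow_nonneg _ k x hx n A C)
      (mjmcP_nonneg k x hx _ _)) ⟨B, Finset.mem_univ B, mul_pos hpos ?_⟩
    simpa only [mjmcM, Matrix.of_apply, List.ofFn_get] using hp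

/-- if `x₀ > 0` and `x_k > 0` then the MJMC is irreducible: for any
two states `A, B ∈ St_{h,k}` there is `n ≥ 0` with `(P^n)_{A,B} > 0`. -/
theorem mjmc_irreducible (h k : ℕ) (hhk : k ≤ h) (x : ℕ → ℝ)
    (hx : ∀ i, 0 ≤ x i) (hsum : ∑ i ∈ Finset.range (k + 1), x i = 1)
    (hx0 : 0 < x 0) (hxk : 0 < x k)
    (A B : Fin h → Bool) (hA : A ∈ stWords h k) (hB : B ∈ stWords h k) :
    ∃ n : ℕ, 0 < (mjmcM h k x ^ n) A B := by
  have hcA : (List.ofFn A).count false = k := (Finset.mem_filter.1 hA).2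
  have hcB : (List.ofFn B).count false = k := (Finset.mem_filter.1 hB).2
  have htot : (List.ofFn A).count true = (List.ofFn B).count true := by
    have h1 := List.count_true_add_count_false (List.ofFn A)
    have h2 := List.count_true_add_count_false (List.ofFn B)
    simp only [List.length_ofFn] at h1 h2
    omega
  have r1 := reach_of_hops k x hx hx0 hxk _ _ hcA (hops_to_sorted (List.ofFn A))
  have r2 := reach_of_isRotated k x hx hxk _ _
    ((hops_count_eq (hops_to_sorted (List.ofFn A))).trans hcA) List.isRotated_append
  have r3 := reach_of_hops k x hx hx0 hxk _ _
    ((hops_count_eq (hops_from_sorted (List.ofFn B))).symm.trans hcB)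
    (hops_from_sorted (List.ofFn B))
  rw [hcA, htot] at r1 r2
  rw [hcB] at r3
  obtain ⟨B', n, hB', hpos⟩ := exists_pow_pos h k x hx A _ ((r1.trans r2).trans r3)
  obtain rfl := List.ofFn_injective hB'
  exact ⟨n, hpos⟩
end

section
/- The row vector w on St_{h,k} defined by w(B) = ∏_{i ∈ {1,…,h}, b_i = •} (x_{E_i(B)} + x_{E_i(B)+1} + ⋯ + x_k), where B = b_1⋯b_h, is invariant for the MJMC: for every B ∈ St_{h,k}, ∑_{A ∈ St_{h,k}} w(A) P_{A,B} = w(B). Consequently π(B) = w(B)/Z_{h,k}, with Z_{h,k} = ∑_{B ∈ St_{h,k}} w(B), is a stationary probability distribution of the MJMC. -/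
lemma sum_words_succ (n : ℕ) (F : List Bool → ℝ) :
    ∑ v : Fin (n + 1) → Bool, F (List.ofFn v) =
      ∑ v : Fin n → Bool, (F (true :: List.ofFn v) + F (false :: List.ofFn v)) := by
  rw [← (Fin.consEquiv (fun _ : Fin (n + 1) => Bool)).sum_comp, Fintype.sum_prod_type,
    Fintype.sum_bool, ← Finset.sum_add_distrib]
  refine Finset.sum_congr rfl fun v _ => ?_
  simp [Fin.consEquiv]

/-- Probability that throwing the ball turns `•L` into `B`, with the parameters `x` shifted by `e`.
The range of `i` is the number of `∘` in `L∘`, so that each `fillAt i` really fills a site. -/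
noncomputable def throwProb (x : ℕ → ℝ) (e : ℕ) (L B : List Bool) : ℝ :=
  ∑ i ∈ Finset.range (L.count false + 1), if B = fillAt i (L ++ [false]) then x (e + i) else 0

/-- Total flow into `B` from throws, over all words `L` of length `n` regardless of their number
of `∘`: words with the wrong number do not reach `B`. The factor of the ball thrown is omitted. -/
noncomputable def flowBall (k : ℕ) (x : ℕ → ℝ) (e n : ℕ) (B : List Bool) : ℝ :=
  ∑ v : Fin n → Bool, wordWeightAux k x e (List.ofFn v) * throwProb x e (List.ofFn v) B

/-- Flow into `B` from the shift `∘L ↦ L∘`; the leading `∘` accounts for the `e + 1`. -/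
noncomputable def flowHole (k : ℕ) (x : ℕ → ℝ) (e n : ℕ) (B : List Bool) : ℝ :=
  ∑ v : Fin n → Bool,
    wordWeightAux k x (e + 1) (List.ofFn v) * if B = List.ofFn v ++ [false] then 1 else 0

lemma count_fillAt (L : List Bool) (i : ℕ) (hi : i < L.count false) :
    (fillAt i L).count false + 1 = L.count false := by
  induction L generalizing i with
  | nil => simp at hi
  | cons b L ih =>
    cases b with
    | true => simpa [fillAt] using ih i (by simpa using hi)
    | false =>
      cases i with
      | zero => simp [fillAt]
      | succ i => simpa [fillAt] using ih i (by simpa using hi)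

lemma throwProb_eq_zero (x : ℕ → ℝ) (e : ℕ) (L B : List Bool)
    (hc : L.count false ≠ B.count false) : throwProb x e L B = 0 := by
  refine Finset.sum_eq_zero fun i hi => if_neg ?_
  rintro rfl
  have := count_fillAt (L ++ [false]) i (by simpa using hi)
  simp at this
  omega

lemma throwProb_true_true (x : ℕ → ℝ) (e : ℕ) (L B : List Bool) :
    throwProb x e (true :: L) (true :: B) = throwProb x e L B := by
  simp [throwProb, fillAt]

lemma throwProb_true_false (x : ℕ → ℝ) (e : ℕ) (L B : List Bool) :
    throwProb x e (true :: L) (false :: B) = 0 := by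
  simp [throwProb, fillAt]

lemma throwProb_false_true (x : ℕ → ℝ) (e : ℕ) (L B : List Bool) :
    throwProb x e (false :: L) (true :: B) = x e * if B = L ++ [false] then 1 else 0 := by
  simp [throwProb, Finset.sum_range_succ' _ (List.count false L + 1), fillAt]

lemma throwProb_false_false (x : ℕ → ℝ) (e : ℕ) (L B : List Bool) :
    throwProb x e (false :: L) (false :: B) = throwProb x (e + 1) L B := by
  simp [throwProb, Finset.sum_range_succ' _ (List.count false L + 1), fillAt, add_assoc, add_comm 1]

lemma flowBall_true (k : ℕ) (x : ℕ → ℝ) (e n : ℕ) (B : List Bool) :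
    flowBall k x e (n + 1) (true :: B) =
      (∑ j ∈ Finset.Icc e k, x j) * flowBall k x e n B + x e * flowHole k x e n B := by
  simp only [flowBall, flowHole]
  rw [sum_words_succ n fun L => wordWeightAux k x e L * throwProb x e L (true :: B),
    Finset.mul_sum, Finset.mul_sum, ← Finset.sum_add_distrib]
  refine Finset.sum_congr rfl fun v _ => ?_
  rw [throwProb_true_true, throwProb_false_true]
  simp only [wordWeightAux]
  ring

lemma flowBall_false (k : ℕ) (x : ℕ → ℝ) (e n : ℕ) (B : List Bool) :
    flowBall k x e (n + 1) (false :: B) = flowBall k x (e + 1) n B := by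
  simp only [flowBall]
  rw [sum_words_succ n fun L => wordWeightAux k x e L * throwProb x e L (false :: B)]
  refine Finset.sum_congr rfl fun v _ => ?_
  rw [throwProb_true_false, throwProb_false_false]
  simp [wordWeightAux]

lemma flowHole_true (k : ℕ) (x : ℕ → ℝ) (e n : ℕ) (B : List Bool) :
    flowHole k x e (n + 1) (true :: B) =
      (∑ j ∈ Finset.Icc (e + 1) k, x j) * flowHole k x e n B := by
  simp only [flowHole]
  rw [sum_words_succ n fun L =>
      wordWeightAux k x (e + 1) L * if true :: B = L ++ [false] then 1 else 0, Finset.mul_sum]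
  refine Finset.sum_congr rfl fun v _ => ?_
  simp [wordWeightAux]

lemma flowHole_false (k : ℕ) (x : ℕ → ℝ) (e n : ℕ) (B : List Bool) :
    flowHole k x e (n + 1) (false :: B) = flowHole k x (e + 1) n B := by
  simp only [flowHole]
  rw [sum_words_succ n fun L =>
      wordWeightAux k x (e + 1) L * if false :: B = L ++ [false] then 1 else 0]
  refine Finset.sum_congr rfl fun v _ => ?_
  simp [wordWeightAux]

/-- The balance equation, for weights that start from `e` empty sites already seen. -/
lemma flowBall_add_flowHole (k : ℕ) (x : ℕ → ℝ) (n e : ℕ) (B : List Bool)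
    (hlen : B.length = n + 1) (hk : e + B.count false = k) :
    flowBall k x e n B + flowHole k x e n B = wordWeightAux k x e B := by
  induction n generalizing e B with
  | zero =>
    obtain ⟨b, rfl⟩ := List.length_eq_one_iff.mp hlen
    cases b with
    | true =>
      obtain rfl : e = k := by simpa using hk
      simp [flowBall, flowHole, throwProb, fillAt, wordWeightAux]
    | false => simp [flowBall, flowHole, throwProb, fillAt, wordWeightAux]
  | succ n ih =>
    obtain - | ⟨b, B⟩ := B
    · simp at hlen
    have hlen' : B.length = n + 1 := by simpa using hlen
    cases b with
    | true =>
      have hk' : e + B.count false = k := by simpa using hk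
      have hS : ∑ j ∈ Finset.Icc e k, x j = x e + ∑ j ∈ Finset.Icc (e + 1) k, x j := by
        have he : e ≤ k := by omega
        rw [← Finset.add_sum_Ioc_eq_sum_Icc he]
        congr 2
        ext j
        simp only [Finset.mem_Ioc, Finset.mem_Icc]
        omega
      rw [flowBall_true, flowHole_true, wordWeightAux, ← ih e B hlen' hk', hS]
      ring
    | false =>
      have hk' : e + 1 + B.count false = k := by
        rw [← hk, List.count_cons_self]; ring
      rw [flowBall_false, flowHole_false, wordWeightAux, ih (e + 1) B hlen' hk']

lemma sum_Icc_zero_eq_one (k : ℕ) (x : ℕ → ℝ) (hsum : ∑ i ∈ Finset.range (k + 1), x i = 1) :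
    ∑ j ∈ Finset.Icc 0 k, x j = 1 := by
  rw [← hsum, Finset.range_eq_Ico]
  rfl

lemma wordWeight_invariant (h k : ℕ) (x : ℕ → ℝ)
    (hsum : ∑ i ∈ Finset.range (k + 1), x i = 1) (B : Fin h → Bool) (hB : B ∈ stWords h k) :
    ∑ A ∈ stWords h k, wordWeight k x (List.ofFn A) * mjmcP k x (List.ofFn A) (List.ofFn B)
      = wordWeight k x (List.ofFn B) := by
  have hc : (List.ofFn B).count false = k := by simpa [stWords] using hB
  cases h with
  | zero =>
    have hs : stWords 0 k = {B} :=
      Finset.eq_singleton_iff_unique_mem.mpr ⟨hB, fun _ _ => Subsingleton.elim _ _⟩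
    simp [hs, mjmcP]
  | succ n =>
    have hS := sum_Icc_zero_eq_one k x hsum
    have key := flowBall_add_flowHole k x n 0 (List.ofFn B) (by simp) (by simpa using hc)
    rw [wordWeight, ← key, stWords, Finset.sum_filter,
      sum_words_succ n fun L => if L.count false = k then
        wordWeight k x L * mjmcP k x L (List.ofFn B) else 0,
      flowBall, flowHole, ← Finset.sum_add_distrib]
    refine Finset.sum_congr rfl fun v _ => congrArg₂ (· + ·) ?_ ?_
    · simp only [wordWeight, wordWeightAux, hS, one_mul, mjmcP]
      split_ifs with hv
      · have hv' : (List.ofFn v).count false = k := by simpa using hv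
        simp [throwProb, hv']
      · rw [throwProb_eq_zero, mul_zero]
        rw [hc]
        simpa using hv
    · simp only [wordWeight, wordWeightAux, mjmcP]
      split_ifs with hv h1 h1
      · rfl
      · rfl
      · rw [h1] at hc
        simp at hc hv
        omega
      · simp

lemma wordWeightAux_nonneg (k : ℕ) (x : ℕ → ℝ) (hx : ∀ i, 0 ≤ x i) (e : ℕ) (L : List Bool) :
    0 ≤ wordWeightAux k x e L := by
  induction L generalizing e with
  | nil => simp [wordWeightAux]
  | cons b L ih =>
    cases b with
    | true => exact mul_nonneg (Finset.sum_nonneg fun i _ => hx i) (ih e)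
    | false => exact ih (e + 1)

lemma wordWeightAux_replicate_false (k : ℕ) (x : ℕ → ℝ) (e m : ℕ) :
    wordWeightAux k x e (List.replicate m false) = 1 := by
  induction m generalizing e with
  | zero => rfl
  | succ m ih => exact ih (e + 1)

/-- The word `•^m ∘^l` has weight `1`, since each of its balls carries the factor `x 0 + ⋯ + x k`. -/
lemma wordWeight_balls_holes (k : ℕ) (x : ℕ → ℝ)
    (hsum : ∑ i ∈ Finset.range (k + 1), x i = 1) (m l : ℕ) :
    wordWeight k x (List.replicate m true ++ List.replicate l false) = 1 := by
  unfold wordWeight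
  induction m with
  | zero => exact wordWeightAux_replicate_false k x 0 l
  | succ m ih =>
    rw [List.replicate_succ, List.cons_append, wordWeightAux, ih, sum_Icc_zero_eq_one k x hsum,
      one_mul]

lemma Zword_pos (h k : ℕ) (hhk : k ≤ h) (x : ℕ → ℝ)
    (hx : ∀ i, 0 ≤ x i) (hsum : ∑ i ∈ Finset.range (k + 1), x i = 1) : 0 < Zword h k x := by
  obtain ⟨v, hv⟩ : ∃ v : Fin h → Bool,
      List.ofFn v = List.replicate (h - k) true ++ List.replicate k false := by
    have hlen : (List.replicate (h - k) true ++ List.replicate k false).length = h := by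
      simp; omega
    generalize List.replicate (h - k) true ++ List.replicate k false = L at hlen
    subst hlen
    exact ⟨L.get, List.ofFn_get L⟩
  refine Finset.sum_pos' (fun B _ => wordWeightAux_nonneg k x hx 0 _) ⟨v, ?_, ?_⟩
  · simp [stWords, hv, List.count_replicate]
  · rw [hv, wordWeight_balls_holes k x hsum]
    exact one_pos

/-- the vector `w(B) = ∏_{i : b_i = •}(x_{E_i(B)} + ⋯ + x_k)` is
invariant for the MJMC, and consequently `π = w / Z_{h,k}` is a stationary
probability distribution. -/
theorem mjmc_stationary_distribution (h k : ℕ) (hhk : k ≤ h) (x : ℕ → ℝ)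
    (hx : ∀ i, 0 ≤ x i) (hsum : ∑ i ∈ Finset.range (k + 1), x i = 1) :
    (∀ B ∈ stWords h k,
        ∑ A ∈ stWords h k,
            wordWeight k x (List.ofFn A) * mjmcP k x (List.ofFn A) (List.ofFn B)
          = wordWeight k x (List.ofFn B)) ∧
    (∀ B ∈ stWords h k,
        ∑ A ∈ stWords h k,
            (wordWeight k x (List.ofFn A) / Zword h k x) *
              mjmcP k x (List.ofFn A) (List.ofFn B)
          = wordWeight k x (List.ofFn B) / Zword h k x) ∧
    (∀ B ∈ stWords h k, 0 ≤ wordWeight k x (List.ofFn B) / Zword h k x) ∧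
    (∑ B ∈ stWords h k, wordWeight k x (List.ofFn B) / Zword h k x = 1) := by
  have hinv := wordWeight_invariant h k x hsum
  have hZ := Zword_pos h k hhk x hx hsum
  refine ⟨hinv, fun B hB => ?_, fun B _ => ?_, ?_⟩
  · rw [← hinv B hB, Finset.sum_div]
    exact Finset.sum_congr rfl fun A _ => div_mul_eq_mul_div _ _ _
  · exact div_nonneg (wordWeightAux_nonneg k x hx 0 _) hZ.le
  · rw [← Finset.sum_div]
    exact div_self hZ.ne'
end

section
/- The measure w on Par_{k,ℓ} defined by w(λ) = ∏_{i=1}^ℓ y_{λ_i}, where y_m = x_m + x_{m+1} + ⋯ + x_k, is invariant for the partition form of the MJMC: for every λ ∈ Par_{k,ℓ}, ∑_{μ ∈ Par_{k,ℓ}} w(μ) P_{μ,λ} = w(λ). -/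
/-!
Fix the target partition `L`. A predecessor of `L` whose last part is nonzero must be `L` with all
parts raised by one; it contributes `w(L + 1)`, which vanishes (as it should) when `L` has a part
equal to `k`, since `y_{k+1} = 0`. A predecessor whose last part is zero is `ν ++ [0]`, where `ν`
is obtained by deleting a part `L_j` of `L` and raising the parts in front of it by one. Every
position `j` is possible (`mem_jugPre_of_eq`, `jugPre_spec`), different positions give different
pairs `(L_j, ν)` (`jugPre_nodup`), and since `y_0 = 1` the contribution of position `j` is
`y_{L_1+1} ⋯ y_{L_{j-1}+1} (y_{L_j} - y_{L_j+1}) y_{L_{j+1}} ⋯ y_{L_ℓ}`, because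
`x_m = y_m - y_{m+1}`. The sum over `j` telescopes to `w(L) - w(L + 1)` (`jugPre_sum`), and adding
the contribution `w(L + 1)` gives `w(L)`.
-/

/-- Insertion of a new part `i` into a nonincreasing list: all parts `> i` (an initial
segment) are decremented by 1, and `i` is inserted in front of the remaining parts.
This realizes `(λ₁−1,…,λ_{j−1}−1, i, λ_j, …)` with `j` minimal such that `λ_j ≤ i`. -/
def jugIns (i : ℕ) : List ℕ → List ℕ
  | [] => [i]
  | a :: rest => if a ≤ i then i :: a :: rest else (a - 1) :: jugIns i rest

/-- Transition probability of the MJMC in the language of integer partitions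
(nonincreasing lists of `ℓ` nonnegative integers, parts at most `k`): if the last
part is nonzero, decrement all parts (probability 1); if the last part is zero,
drop it, decrement-and-insert a new part `i` with probability `x i`. -/
noncomputable def parP (k : ℕ) (x : ℕ → ℝ) (lam mu : List ℕ) : ℝ :=
  if lam.getLast? = some 0 then
    ∑ i ∈ Finset.range (k + 1), if mu = jugIns i lam.dropLast then x i else 0
  else if mu = lam.map (· - 1) then 1 else 0

/-- All pairs `(i, ν)` obtained by removing one part `i` of `L` and increasing the parts in front of
it by one. For nonincreasing `L` these are exactly the pairs with `jugIns i ν = L`. -/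
def jugPre : List ℕ → List (ℕ × List ℕ)
  | [] => []
  | a :: rest => (a, rest) :: (jugPre rest).map (fun p => (p.1, (a + 1) :: p.2))

theorem mem_jugPre_of_eq (i : ℕ) (nu : List ℕ) : (i, nu) ∈ jugPre (jugIns i nu) := by
  induction nu with
  | nil => simp [jugIns, jugPre]
  | cons b t ih =>
    by_cases h : b ≤ i
    · simp [jugIns, jugPre, h]
    · simp only [jugIns, h, if_false, jugPre, List.mem_cons, List.mem_map]
      refine Or.inr ⟨(i, t), ih, ?_⟩
      simp only [Prod.mk.injEq, List.cons.injEq, true_and, and_true]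
      omega

theorem jugPre_le (L : List ℕ) (M : ℕ) (hM : ∀ a ∈ L, a ≤ M) :
    ∀ p ∈ jugPre L, p.1 ≤ M ∧ ∀ b ∈ p.2, b ≤ M + 1 := by
  induction L with
  | nil => simp [jugPre]
  | cons a t ih =>
    intro p hp
    simp only [jugPre, List.mem_cons, List.mem_map] at hp
    have ha := hM a (by simp)
    have ht : ∀ c ∈ t, c ≤ M := fun c hc => hM c (by simp [hc])
    rcases hp with rfl | ⟨q, hq, rfl⟩
    · exact ⟨ha, fun b hb => (ht b hb).trans (Nat.le_succ M)⟩
    · obtain ⟨h1, h2⟩ := ih ht q hq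
      refine ⟨h1, fun b hb => ?_⟩
      rcases List.mem_cons.1 hb with rfl | hb
      · omega
      · exact h2 b hb

/-- For nonincreasing `L`, every pair `(i, ν)` in `jugPre L` does satisfy `jugIns i ν = L`, and
`ν` is again nonincreasing. -/
theorem jugPre_spec (L : List ℕ) (hL : L.Pairwise (· ≥ ·)) :
    ∀ p ∈ jugPre L, jugIns p.1 p.2 = L ∧ p.2.Pairwise (· ≥ ·) ∧ p.2.length + 1 = L.length := by
  induction L with
  | nil => simp [jugPre]
  | cons a t ih =>
    intro p hp
    simp only [jugPre, List.mem_cons, List.mem_map] at hp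
    obtain ⟨hat, ht⟩ := List.pairwise_cons.1 hL
    rcases hp with rfl | ⟨q, hq, rfl⟩
    · refine ⟨?_, ht, by simp⟩
      cases t with
      | nil => rfl
      | cons b t => simp [jugIns, show b ≤ a from hat b (by simp)]
    · obtain ⟨h1, h2, h3⟩ := ih ht q hq
      obtain ⟨h4, h5⟩ := jugPre_le t a hat q hq
      refine ⟨?_, List.pairwise_cons.2 ⟨h5, h2⟩, by simp [h3]⟩
      simp [jugIns, show ¬ (a + 1 ≤ q.1) by omega, h1]

/-- Equal parts of `L` give different pairs, since the numbers of increased parts differ. -/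
theorem jugPre_nodup (L : List ℕ) (hL : L.Pairwise (· ≥ ·)) : (jugPre L).Nodup := by
  induction L with
  | nil => simp [jugPre]
  | cons a t ih =>
    obtain ⟨hat, ht⟩ := List.pairwise_cons.1 hL
    refine List.nodup_cons.2 ⟨?_, (ih ht).map ?_⟩
    · intro h
      obtain ⟨q, -, hq⟩ := List.mem_map.1 h
      have h2 : (a + 1) :: q.2 = t := (Prod.mk.inj hq).2
      have h3 := hat (a + 1) (by rw [← h2]; simp)
      omega
    · rintro ⟨p1, p2⟩ ⟨q1, q2⟩ h
      simpa using h

/-- The telescoping sum over all positions of the removed part. -/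
theorem jugPre_sum (x y : ℕ → ℝ) (L : List ℕ) (h : ∀ a ∈ L, x a = y a - y (a + 1)) :
    ((jugPre L).map (fun p => (p.2.map y).prod * x p.1)).sum
      = (L.map y).prod - (L.map (fun a => y (a + 1))).prod := by
  induction L with
  | nil => simp [jugPre]
  | cons a t ih =>
    have ih := ih (fun c hc => h c (by simp [hc]))
    simp only [jugPre, List.map_cons, List.map_map, List.sum_cons, List.prod_cons,
      Function.comp_def, mul_assoc, List.sum_map_mul_left]
    rw [ih, h a (by simp)]
    ring

/-- Invariance in terms of lists, for a finite set `A` consisting of the elements of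
`Par_{k,ℓ}`. -/
theorem jug_invariant_list (k : ℕ) (x y : ℕ → ℝ) (hy0 : y 0 = 1)
    (hy : ∀ a, k < a → y a = 0) (hxy : ∀ a ≤ k, x a = y a - y (a + 1))
    (L : List ℕ) (hL : L.Pairwise (· ≥ ·)) (hk : ∀ a ∈ L, a ≤ k) (A : Finset (List ℕ))
    (hA : ∀ m, m ∈ A ↔ m.length = L.length ∧ m.Pairwise (· ≥ ·) ∧ ∀ a ∈ m, a ≤ k) :
    ∑ m ∈ A, (m.map y).prod * parP k x m L = (L.map y).prod := by
  have hvan : ∀ m : List ℕ, (m.map y).prod ≠ 0 → ∀ a ∈ m, a ≤ k := by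
    intro m hm a ha
    by_contra hlt
    exact hm (List.prod_eq_zero (List.mem_map.2 ⟨a, ha, hy a (by omega)⟩))
  have hsplit : ∀ m ∈ A, (m.map y).prod * parP k x m L =
      (∑ i ∈ Finset.range (k + 1),
        if m.getLast? = some 0 ∧ L = jugIns i m.dropLast then (m.map y).prod * x i else 0)
      + if m = L.map (· + 1) then (m.map y).prod else 0 := by
    intro m hm
    obtain ⟨-, hms, -⟩ := (hA m).1 hm
    by_cases h0 : m.getLast? = some 0
    · have hne : m ≠ L.map (· + 1) := by
        rintro rfl
        have := List.mem_of_getLast? h0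
        simp at this
      simp [parP, h0, hne, Finset.mul_sum]
    · -- a nonincreasing list whose last part is nonzero has only positive parts
      have hpos : ∀ a ∈ m, a ≠ 0 := by
        rintro a ha rfl
        apply h0
        have hne : m ≠ [] := List.ne_nil_of_mem ha
        rw [List.getLast?_eq_some_getLast hne]
        have hsp := List.dropLast_append_getLast hne
        rw [← hsp] at ha hms
        rcases List.mem_append.1 ha with h | h
        · have := (List.pairwise_append.1 hms).2.2 0 h (m.getLast hne) (by simp)
          congr 1; omega
        · congr 1; simpa using (List.mem_singleton.1 h).symm
      have hiff : L = m.map (· - 1) ↔ m = L.map (· + 1) := by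
        constructor
        · rintro rfl
          rw [List.map_map]
          conv_lhs => rw [← List.map_id m]
          refine List.map_congr_left fun a ha => ?_
          have := hpos a ha
          simp only [id, Function.comp]
          omega
        · rintro rfl
          simp [Function.comp_def]
      simp [parP, h0, hiff]
  rw [Finset.sum_congr rfl hsplit, Finset.sum_add_distrib]
  have hup : (∑ m ∈ A, if m = L.map (· + 1) then (m.map y).prod else 0)
      = (L.map (fun a => y (a + 1))).prod := by
    have he : ((L.map (· + 1)).map y).prod = (L.map (fun a => y (a + 1))).prod := by
      simp [Function.comp_def]
    rw [Finset.sum_ite_eq', ← he]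
    split_ifs with h
    · rfl
    · by_contra hne
      refine h ((hA _).2 ⟨by simp, ?_, hvan _ (Ne.symm hne)⟩)
      rw [List.pairwise_map]
      exact hL.imp (fun h => by omega)
  have hins : (∑ m ∈ A, ∑ i ∈ Finset.range (k + 1),
        if m.getLast? = some 0 ∧ L = jugIns i m.dropLast then (m.map y).prod * x i else 0)
      = ((jugPre L).map (fun p => (p.2.map y).prod * x p.1)).sum := by
    rw [← List.sum_toFinset _ (jugPre_nodup L hL), ← Finset.sum_product']
    symm
    -- predecessors with a part `k + 1` lie outside `Par_{k,ℓ}`, but their weight is zero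
    rw [← Finset.sum_filter_of_ne (p := fun p : ℕ × List ℕ => ∀ a ∈ p.2, a ≤ k)
      (fun p _ hp => hvan p.2 (left_ne_zero_of_mul hp))]
    refine Finset.sum_of_injOn (fun p => (p.2 ++ [0], p.1)) ?_ ?_ ?_ ?_
    · rintro ⟨p1, p2⟩ - ⟨q1, q2⟩ - h
      simp at h
      simp [h]
    · intro p hp
      simp only [Finset.coe_filter, List.mem_toFinset, Set.mem_ofPred_eq] at hp
      obtain ⟨h1, h2, h3⟩ := jugPre_spec L hL p hp.1
      have h4 := (jugPre_le L k hk p hp.1).1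
      simp only [Finset.coe_product, Set.mem_prod, Finset.mem_coe, Finset.mem_range, hA]
      refine ⟨⟨by simp [h3], ?_, ?_⟩, by omega⟩
      · rw [List.pairwise_append]
        exact ⟨h2, by simp, by simp⟩
      · intro a ha
        rcases List.mem_append.1 ha with h | h
        · exact hp.2 a h
        · simp at h; omega
    · rintro ⟨m, i⟩ hmi hnot
      refine if_neg ?_
      rintro ⟨h0, hLi⟩
      apply hnot
      simp only [Finset.mem_product, hA] at hmi
      refine ⟨(i, m.dropLast), ?_, ?_⟩
      · simp only [Finset.coe_filter, List.mem_toFinset, Set.mem_ofPred_eq]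
        refine ⟨hLi ▸ mem_jugPre_of_eq i m.dropLast, fun a ha => ?_⟩
        exact hmi.1.2.2 a (List.mem_of_mem_dropLast ha)
      · simp [List.dropLast_append_getLast? 0 h0]
    · intro p hp
      simp only [Finset.mem_filter, List.mem_toFinset] at hp
      simp [(jugPre_spec L hL p hp.1).1, hy0]
  rw [hins, hup, jugPre_sum x y L (fun a ha => hxy a (hk a ha))]
  ring

/-- the measure `w(λ) = ∏_{i=1}^ℓ y_{λ_i}`, with
`y_m = x_m + ⋯ + x_k`, is invariant for the partition form of the MJMC. Partitions in
`Par_{k,ℓ}` are encoded as nonincreasing tuples `Fin ℓ → Fin (k+1)`. -/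
theorem par_mjmc_invariant (k ℓ : ℕ) (x : ℕ → ℝ)
    (hx : ∀ i, 0 ≤ x i) (hsum : ∑ i ∈ Finset.range (k + 1), x i = 1)
    (lam : Fin ℓ → ℕ) (hanti : ∀ i j : Fin ℓ, i ≤ j → lam j ≤ lam i)
    (hle : ∀ i, lam i ≤ k) :
    ∑ mu ∈ (Finset.univ : Finset (Fin ℓ → Fin (k + 1))).filter
        (fun mu => ∀ i j : Fin ℓ, i ≤ j → (mu j : ℕ) ≤ (mu i : ℕ)),
      (∏ i, ∑ j ∈ Finset.Icc ((mu i : ℕ)) k, x j) *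
        parP k x (List.ofFn (fun i => ((mu i : ℕ)))) (List.ofFn lam)
      = ∏ i, ∑ j ∈ Finset.Icc (lam i) k, x j := by
  set y : ℕ → ℝ := fun m => ∑ j ∈ Finset.Icc m k, x j with hydef
  have hprod : ∀ f : Fin ℓ → ℕ, ∏ i, y (f i) = ((List.ofFn f).map y).prod := by
    intro f
    rw [List.map_ofFn, List.prod_ofFn]
    rfl
  set F : (Fin ℓ → Fin (k + 1)) → List ℕ := fun mu => List.ofFn (fun i => (mu i : ℕ)) with hF
  have hFinj : Function.Injective F := by
    intro a b hab
    funext i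
    exact Fin.ext (congrFun (List.ofFn_injective hab) i)
  have key := jug_invariant_list k x y ?_ ?_ ?_ (List.ofFn lam) ?_ ?_
    (((Finset.univ : Finset (Fin ℓ → Fin (k + 1))).filter
        (fun mu => ∀ i j : Fin ℓ, i ≤ j → (mu j : ℕ) ≤ (mu i : ℕ))).image F) ?_
  · rw [Finset.sum_image (fun a _ b _ h => hFinj h)] at key
    rw [← hprod] at key
    rw [← key]
    refine Finset.sum_congr rfl fun mu _ => ?_
    rw [← hprod (fun i => (mu i : ℕ))]
  · rw [← hsum]
    refine Finset.sum_congr ?_ fun _ _ => rfl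
    ext a
    simp
  · intro a ha
    simp [hydef, Finset.Icc_eq_empty_of_lt ha]
  · intro a ha
    have : Finset.Icc a k = insert a (Finset.Icc (a + 1) k) := by
      ext b
      simp
      omega
    simp only [hydef]
    rw [this, Finset.sum_insert (by simp)]
    ring
  · rw [List.pairwise_ofFn]
    exact fun i j hij => hanti i j hij.le
  · intro a ha
    obtain ⟨i, rfl⟩ := (List.mem_ofFn' _ _).1 ha
    exact hle i
  · intro m
    simp only [Finset.mem_image, Finset.mem_filter, Finset.mem_univ, true_and, List.length_ofFn]
    constructor
    · rintro ⟨mu, hmu, rfl⟩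
      refine ⟨by simp [hF], ?_, ?_⟩
      · rw [List.pairwise_ofFn]
        exact fun i j hij => hmu i j hij.le
      · intro a ha
        obtain ⟨i, rfl⟩ := (List.mem_ofFn' _ _).1 ha
        exact Nat.lt_succ_iff.1 (mu i).2
    · rintro ⟨rfl, hs, hb⟩
      refine ⟨fun i => ⟨m.get i, Nat.lt_succ_iff.2 (hb _ (List.get_mem m i))⟩, ?_, ?_⟩
      · intro i j hij
        rcases hij.lt_or_eq with h | rfl
        · exact List.pairwise_iff_get.1 hs i j h
        · exact le_rfl
      · exact List.ofFn_get m
end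

section
/- For integers h ≥ k ≥ 0, the sum ∑_{B ∈ St_{h,k}} ∏_{i ∈ {1,…,h}, b_i = •} (k + 1 − E_i(B)) equals the number of partitions of a set with h+1 elements into exactly k+1 nonempty blocks (the Stirling number of the second kind S(h+1, k+1)). -/
/-- Auxiliary weight: `e` records the number of `∘`'s already seen, so the factor
attached to a `•` at position `i` is `k + 1 − E_i(B)`. -/
def natWeightAux (k : ℕ) : ℕ → List Bool → ℕ
  | _, [] => 1
  | e, false :: rest => natWeightAux k (e + 1) rest
  | e, true :: rest => (k + 1 - e) * natWeightAux k e rest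

/-- `P` is a partition of the finite type `α` into exactly `m` nonempty blocks. -/
def IsSetPartitionInto {α : Type*} [DecidableEq α] (P : Finset (Finset α)) (m : ℕ) : Prop :=
  (∀ b ∈ P, b.Nonempty) ∧ (∀ b₁ ∈ P, ∀ b₂ ∈ P, b₁ ≠ b₂ → Disjoint b₁ b₂) ∧
    (∀ a : α, ∃ b ∈ P, a ∈ b) ∧ P.card = m


/-- The weights depend on `k` and `e` only through `k + 1 - e`, so a word that has read one `∘` is
weighted as a fresh word with `k` lowered by one. -/
theorem natWeightAux_succ_succ (k e : ℕ) (l : List Bool) :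
    natWeightAux (k + 1) (e + 1) l = natWeightAux k e l := by
  induction l generalizing e with
  | nil => rfl
  | cons b l ih => cases b <;> simp [natWeightAux, ih]

theorem sum_natWeightAux_eq (h k : ℕ) :
    ∑ B ∈ stWords h k, natWeightAux k 0 (List.ofFn B) = Nat.stirlingSecond (h + 1) (k + 1) := by
  induction h generalizing k with
  | zero =>
    cases k with
    | zero => simp [stWords, natWeightAux, Nat.stirlingSecond]
    | succ k => simp [stWords, Nat.stirlingSecond]
  | succ h ih =>
    rw [Nat.stirlingSecond_succ_succ, ← ih k]
    simp only [stWords, Finset.sum_filter] at ih ⊢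
    rw [← (Fin.consEquiv (fun _ : Fin (h + 1) => Bool)).sum_comp, Fintype.sum_prod_type]
    simp only [Fin.consEquiv, Equiv.coe_fn_mk, List.ofFn_cons, Fintype.sum_bool, natWeightAux]
    congr 1
    · simp [Finset.mul_sum]
    · cases k with
      | zero => simp
      | succ k =>
        rw [← ih k]
        simp [natWeightAux_succ_succ]

section Partitions

variable {α : Type*} [Fintype α] [DecidableEq α]

/-- The partitions of the finset `s` into exactly `m` nonempty blocks, as finsets of finsets of the
ambient type. Disjointness says that blocks sharing an element are equal. -/
noncomputable def partsInto (s : Finset α) (m : ℕ) : Finset (Finset (Finset α)) :=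
  open Classical in Finset.univ.filter (fun P => (∀ b ∈ P, b.Nonempty) ∧
    (∀ b₁ ∈ P, ∀ b₂ ∈ P, ∀ x ∈ b₁, x ∈ b₂ → b₁ = b₂) ∧
    (∀ x, x ∈ s ↔ ∃ b ∈ P, x ∈ b) ∧ P.card = m)

theorem mem_partsInto {s : Finset α} {m : ℕ} {P : Finset (Finset α)} :
    P ∈ partsInto s m ↔ (∀ b ∈ P, b.Nonempty) ∧
    (∀ b₁ ∈ P, ∀ b₂ ∈ P, ∀ x ∈ b₁, x ∈ b₂ → b₁ = b₂) ∧
    (∀ x, x ∈ s ↔ ∃ b ∈ P, x ∈ b) ∧ P.card = m := by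
  simp [partsInto]

/-- Deleting the block `{a}` is a bijection onto the partitions of `s` with one block less. -/
theorem card_partsInto_singleton_mem {s : Finset α} {a : α} (ha : a ∉ s) (m : ℕ) :
    ((partsInto (insert a s) (m + 1)).filter (fun P => {a} ∈ P)).card = (partsInto s m).card := by
  refine Finset.card_nbij' (fun P => P.erase {a}) (fun Q => insert {a} Q) ?_ ?_ ?_ ?_
  · intro P hP
    simp only [Finset.coe_filter, Set.mem_ofPred_eq, mem_partsInto, Finset.mem_coe] at hP ⊢
    obtain ⟨⟨h1, h2, h3, h4⟩, h5⟩ := hP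
    refine ⟨by grind, by grind, ?_, by grind⟩
    intro x
    have := h3 x
    have := h2 {a} h5
    grind
  · intro Q hQ
    simp only [Finset.coe_filter, Set.mem_ofPred_eq, mem_partsInto, Finset.mem_coe] at hQ ⊢
    obtain ⟨h1, h2, h3, h4⟩ := hQ
    have h6 : ∀ b ∈ Q, a ∉ b := fun b hb hab => ha ((h3 a).2 ⟨b, hb, hab⟩)
    have h5 : {a} ∉ Q := fun h => h6 _ h (by simp)
    refine ⟨⟨by grind, by grind, ?_, by grind⟩, by grind⟩
    intro x
    have := h3 x
    simp only [Finset.mem_insert, exists_eq_or_imp, Finset.mem_singleton, this]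
  · intro P hP
    simp only [Finset.coe_filter, Set.mem_ofPred_eq] at hP
    exact Finset.insert_erase hP.2
  · intro Q hQ
    simp only [mem_partsInto, Finset.mem_coe] at hQ
    refine Finset.erase_insert fun h => ha ((hQ.2.2.1 a).2 ⟨_, h, by simp⟩)

/-- Partitions of `insert a s` without the block `{a}` correspond to pairs of a partition `Q` of
`s` into `m` blocks and a block `b` of `Q`, to which `a` is added. -/
theorem card_partsInto_singleton_notMem {s : Finset α} {a : α} (ha : a ∉ s) (m : ℕ) :
    ((partsInto (insert a s) m).filter (fun P => ¬ {a} ∈ P)).card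
      = m * (partsInto s m).card := by
  have hc : ((partsInto s m).sigma (fun Q => Q)).card = m * (partsInto s m).card := by
    rw [Finset.card_sigma, Finset.sum_const_nat (m := m), mul_comm]
    exact fun Q hQ => (mem_partsInto.1 hQ).2.2.2
  rw [← hc]
  symm
  refine Finset.card_bij (fun p _ => insert (insert a p.2) (p.1.erase p.2)) ?_ ?_ ?_
  · rintro ⟨Q, b⟩ hQ
    simp only [Finset.mem_sigma, Finset.mem_filter, mem_partsInto] at hQ ⊢
    obtain ⟨⟨h1, h2, h3, h4⟩, hb⟩ := hQ
    have h6 : ∀ b ∈ Q, a ∉ b := fun b hb hab => ha ((h3 a).2 ⟨b, hb, hab⟩)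
    have h7 : insert a b ∉ Q := fun h => h6 _ h (by simp)
    have h8 : {a} ∉ Q := fun h => h6 _ h (by simp)
    refine ⟨⟨by grind, by grind, ?_, ?_⟩, ?_⟩
    · intro x
      simp only [Finset.mem_insert, exists_eq_or_imp, Finset.mem_erase, h3 x]
      grind
    · rw [Finset.card_insert_of_notMem (by grind), Finset.card_erase_add_one hb, h4]
    · have h9 : {a} ≠ insert a b := by
        obtain ⟨x, hx⟩ := h1 b hb
        intro h
        have : x ∈ ({a} : Finset α) := h ▸ Finset.mem_insert_of_mem hx
        grind
      grind
  · rintro ⟨Q, b⟩ hQ ⟨Q', b'⟩ hQ' h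
    simp only [Finset.mem_sigma, mem_partsInto] at hQ hQ' h
    obtain ⟨⟨-, -, h3, -⟩, hb⟩ := hQ
    obtain ⟨⟨-, -, h3', -⟩, hb'⟩ := hQ'
    have h6 : ∀ b ∈ Q, a ∉ b := fun b hb hab => ha ((h3 a).2 ⟨b, hb, hab⟩)
    have h6' : ∀ b ∈ Q', a ∉ b := fun b hb hab => ha ((h3' a).2 ⟨b, hb, hab⟩)
    -- The marked block is the block of `a` minus `a`; the other blocks are those avoiding `a`.
    have e1 : insert a b = insert a b' := by
      have : insert a b ∈ insert (insert a b') (Q'.erase b') := by rw [← h]; simp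
      grind
    have e2 : b = b' := by
      rw [← Finset.erase_insert (h6 b hb), e1, Finset.erase_insert (h6' b' hb')]
    subst e2
    have e3 : Q.erase b = Q'.erase b := by
      rw [← Finset.erase_insert (a := insert a b) (s := Q.erase b) (by grind), h,
        Finset.erase_insert (by grind)]
    have e4 : Q = Q' := by rw [← Finset.insert_erase hb, e3, Finset.insert_erase hb']
    subst e4
    rfl
  · intro P hP
    simp only [Finset.mem_filter, mem_partsInto] at hP
    -- `C` is the block of `a`; it is not `{a}`, so `C.erase a` is a legitimate block.
    obtain ⟨⟨h1, h2, h3, h4⟩, h5⟩ := hP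
    obtain ⟨C, hC, haC⟩ := (h3 a).1 (by simp)
    have hne : (C.erase a).Nonempty := by
      rw [Finset.nonempty_iff_ne_empty, Ne, Finset.erase_eq_empty_iff]
      grind
    have h7 : C.erase a ∉ P := fun h => by
      obtain ⟨x, hx⟩ := hne
      have := h2 _ h C hC x hx (Finset.mem_of_mem_erase hx)
      grind
    refine ⟨⟨insert (C.erase a) (P.erase C), C.erase a⟩, ?_, ?_⟩
    · simp only [Finset.mem_sigma, mem_partsInto]
      refine ⟨⟨by grind, by grind, ?_, ?_⟩, by simp⟩
      · intro x
        have := h3 x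
        have := h2 C hC
        simp only [Finset.mem_insert, exists_eq_or_imp, Finset.mem_erase] at *
        grind
      · rw [Finset.card_insert_of_notMem (by grind), Finset.card_erase_add_one hC, h4]
    · simp only
      rw [Finset.erase_insert (by grind), Finset.insert_erase haC, Finset.insert_erase hC]

theorem card_partsInto_insert {s : Finset α} {a : α} (ha : a ∉ s) (m : ℕ) :
    (partsInto (insert a s) (m + 1)).card
      = (m + 1) * (partsInto s (m + 1)).card + (partsInto s m).card := by
  rw [← Finset.card_filter_add_card_filter_not (fun P => {a} ∈ P),
    card_partsInto_singleton_mem ha, card_partsInto_singleton_notMem ha, add_comm]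

theorem card_partsInto (s : Finset α) (m : ℕ) :
    (partsInto s m).card = Nat.stirlingSecond s.card m := by
  induction s using Finset.induction_on generalizing m with
  | empty =>
    have key : ∀ P : Finset (Finset α), P ∈ partsInto ∅ m ↔ P = ∅ ∧ m = 0 := by
      intro P
      rw [mem_partsInto]
      constructor
      · rintro ⟨h1, -, h3, h4⟩
        have : P = ∅ := by
          rw [Finset.eq_empty_iff_forall_notMem]
          intro b hb
          obtain ⟨x, hx⟩ := h1 b hb
          simpa using (h3 x).2 ⟨b, hb, hx⟩
        subst this
        exact ⟨rfl, by simpa using h4.symm⟩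
      · rintro ⟨rfl, rfl⟩
        simp
    cases m with
    | zero =>
      have : partsInto (∅ : Finset α) 0 = {∅} := by ext P; simp [key]
      simp [this]
    | succ m =>
      have : partsInto (∅ : Finset α) (m + 1) = ∅ := by ext P; simp [key]
      simp [this]
  | insert a s ha ih =>
    rw [Finset.card_insert_of_notMem ha]
    cases m with
    | zero =>
      rw [Nat.stirlingSecond_succ_zero, Finset.card_eq_zero, Finset.eq_empty_iff_forall_notMem]
      intro P hP
      obtain ⟨-, -, h3, h4⟩ := mem_partsInto.1 hP
      rw [Finset.card_eq_zero] at h4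
      subst h4
      simpa using h3 a
    | succ m => rw [card_partsInto_insert ha, ih, ih, Nat.stirlingSecond_succ_succ]

theorem isSetPartitionInto_iff (P : Finset (Finset α)) (m : ℕ) :
    IsSetPartitionInto P m ↔ P ∈ partsInto Finset.univ m := by
  rw [mem_partsInto]
  unfold IsSetPartitionInto
  simp only [Finset.mem_univ, true_iff]
  refine and_congr_right fun _ => and_congr_left fun _ => ?_
  refine forall₄_congr fun b₁ _ b₂ _ => ?_
  rw [Finset.disjoint_left]
  grind

end Partitions

/-- `∑_{B ∈ St_{h,k}} ∏_{i : b_i = •} (k + 1 − E_i(B))` equals the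
number of partitions of a set with `h+1` elements into exactly `k+1` nonempty blocks
(the Stirling number of the second kind `S(h+1, k+1)`). -/
theorem Zword_ones_eq_stirling (h k : ℕ) (hk : k ≤ h) :
    ∑ B ∈ stWords h k, natWeightAux k 0 (List.ofFn B)
      = Set.ncard {P : Finset (Finset (Fin (h + 1))) | IsSetPartitionInto P (k + 1)} := by
  have hs : {P : Finset (Finset (Fin (h + 1))) | IsSetPartitionInto P (k + 1)}
      = ↑(partsInto (Finset.univ : Finset (Fin (h + 1))) (k + 1)) := by
    ext P
    simp [isSetPartitionInto_iff]
  rw [hs, Set.ncard_coe_finset, card_partsInto, sum_natWeightAux_eq, Finset.card_univ,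
    Fintype.card_fin]
end

section
/- For any real numbers x_0,…,x_k and integers h ≥ k ≥ 1, one has Z_{h,k}(x_0,…,x_k) = ∑_{n=0}^{h−k} C(h,n) · x_k^n · Z_{h−n−1,k−1}(x_0,…,x_{k−1}), where C(h,n) is the binomial coefficient, Z_{h,k}(x_0,…,x_k) := ∑_{B ∈ St_{h,k}} ∏_{i ∈ {1,…,h}, b_i = •} (x_{E_i(B)} + ⋯ + x_k), and Z_{h,k} = 0 when h < k. -/
/-- The sum, over words of length `h` with `r` letters `∘`, of the product over the letters `•`
of `y (e + number of ∘ to the left)`, defined by recursion on the first letter. -/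
noncomputable def wordSum (y : ℕ → ℝ) : ℕ → ℕ → ℕ → ℝ
  | 0, 0, _ => 1
  | 0, _ + 1, _ => 0
  | h + 1, 0, e => y e * wordSum y h 0 e
  | h + 1, r + 1, e => y e * wordSum y h (r + 1) e + wordSum y h r (e + 1)

lemma sum_wordWeightAux_eq_wordSum (k : ℕ) (x : ℕ → ℝ) (h r e : ℕ) :
    (∑ B : Fin h → Bool, if (List.ofFn B).count false = r
        then wordWeightAux k x e (List.ofFn B) else 0)
      = wordSum (fun e => ∑ j ∈ Finset.Icc e k, x j) h r e := by
  induction h generalizing r e with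
  | zero => cases r <;> simp [wordSum, wordWeightAux]
  | succ h ih =>
    rw [← (Fin.consEquiv (fun _ : Fin (h + 1) => Bool)).sum_comp, Fintype.sum_prod_type,
      Fintype.sum_bool]
    cases r with
    | zero =>
      simp [Fin.consEquiv, List.ofFn_succ, wordSum, wordWeightAux, ← ih, Finset.mul_sum]
    | succ r =>
      simp [Fin.consEquiv, List.ofFn_succ, wordSum, wordWeightAux, ← ih, Finset.mul_sum]

lemma Zword_eq_wordSum (h k m : ℕ) (x : ℕ → ℝ) (hm : m = k) :
    Zword h k x = wordSum (fun e => ∑ j ∈ Finset.Icc e m, x j) h k 0 := by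
  subst hm
  rw [← sum_wordWeightAux_eq_wordSum, Zword, stWords, Finset.sum_filter]
  rfl

lemma wordSum_eq_zero_of_lt (y : ℕ → ℝ) (h r e : ℕ) (hr : h < r) : wordSum y h r e = 0 := by
  induction h generalizing r e with
  | zero =>
    obtain ⟨r, rfl⟩ := Nat.exists_eq_succ_of_ne_zero hr.ne'
    rfl
  | succ h ih =>
    obtain ⟨r, rfl⟩ := Nat.exists_eq_succ_of_ne_zero (Nat.ne_zero_of_lt hr)
    rw [wordSum, ih _ _ (by omega), ih _ _ (by omega)]
    simp

/-- Pascal's rule for binomial transforms. -/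
lemma sum_choose_succ_mul (t : ℝ) (f : ℕ → ℝ) (h : ℕ) :
    ∑ n ∈ Finset.range (h + 2), ((h + 1).choose n : ℝ) * t ^ n * f (h + 1 - n)
      = ∑ n ∈ Finset.range (h + 1), (h.choose n : ℝ) * t ^ n * f (h - n + 1)
        + t * ∑ n ∈ Finset.range (h + 1), (h.choose n : ℝ) * t ^ n * f (h - n) := by
  have key : ∑ n ∈ Finset.range (h + 1), (h.choose n : ℝ) * t ^ n * f (h - n + 1)
      = ∑ n ∈ Finset.range (h + 2), (h.choose n : ℝ) * t ^ n * f (h + 1 - n) := by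
    rw [Finset.sum_range_succ _ (h + 1)]
    simp only [Nat.choose_succ_self, Nat.cast_zero, zero_mul, add_zero]
    refine Finset.sum_congr rfl fun n hn => ?_
    rw [Finset.mem_range] at hn
    rw [show h - n + 1 = h + 1 - n by omega]
  rw [key, Finset.sum_range_succ' _ (h + 1), Finset.sum_range_succ' _ (h + 1), Finset.mul_sum,
    add_right_comm, ← Finset.sum_add_distrib]
  simp only [Nat.choose_zero_right]
  congr 1
  refine Finset.sum_congr rfl fun n _ => ?_
  rw [Nat.choose_succ_succ, Nat.add_sub_add_right]
  push_cast
  ring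

lemma wordSum_add_const (y y' : ℕ → ℝ) (t : ℝ) (h r e : ℕ)
    (hy : ∀ j, j ≤ e + r → y' j = y j + t) :
    wordSum y' h r e
      = ∑ n ∈ Finset.range (h + 1), (h.choose n : ℝ) * t ^ n * wordSum y (h - n) r e := by
  induction h generalizing r e with
  | zero => cases r <;> simp [wordSum]
  | succ h ih =>
    rw [sum_choose_succ_mul t (fun m => wordSum y m r e)]
    cases r with
    | zero =>
      rw [wordSum, ih _ _ hy, hy e (by omega), add_mul, Finset.mul_sum]
      congr 1
      refine Finset.sum_congr rfl fun n _ => ?_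
      rw [wordSum]
      ring
    | succ r =>
      rw [wordSum, ih _ _ hy, ih r (e + 1) (fun j hj => hy j (by omega)), hy e (by omega),
        add_mul, Finset.mul_sum, add_right_comm, ← Finset.sum_add_distrib]
      congr 1
      refine Finset.sum_congr rfl fun n _ => ?_
      rw [wordSum]
      ring

lemma wordSum_succ_succ_of_last_eq_zero (y : ℕ → ℝ) (h r e : ℕ) (hy : y (e + r + 1) = 0) :
    wordSum y (h + 1) (r + 1) e = wordSum y h r e := by
  induction h generalizing r e with
  | zero => cases r <;> simp [wordSum]
  | succ h ih =>
    rw [wordSum, ih r e hy]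
    cases r with
    | zero =>
      have : y (e + 1) = 0 := hy
      simp [wordSum, this]
    | succ r =>
      rw [ih r (e + 1) (by rw [← hy]; congr 1; omega), wordSum]

/-- for `h ≥ k ≥ 1`,
`Z_{h,k}(x_0,…,x_k) = ∑_{n=0}^{h−k} C(h,n) x_k^n Z_{h−n−1,k−1}(x_0,…,x_{k−1})`. -/
theorem Zword_recursion_top (h k : ℕ) (hk : 1 ≤ k) (hkh : k ≤ h) (x : ℕ → ℝ) :
    Zword h k x
      = ∑ n ∈ Finset.range (h - k + 1),
          (h.choose n : ℝ) * (x k) ^ n * Zword (h - n - 1) (k - 1) x := by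
  obtain ⟨r, rfl⟩ : ∃ r, k = r + 1 := ⟨k - 1, by omega⟩
  rw [Zword_eq_wordSum h (r + 1) (r + 1) x rfl,
    wordSum_add_const (fun e => ∑ j ∈ Finset.Icc e r, x j) _ (x (r + 1)) h (r + 1) 0
      (fun j hj => Finset.sum_Icc_succ_top (by omega) _)]
  symm
  -- The terms with `n > h - k` vanish: there are no words with more `∘` than letters.
  refine Finset.sum_subset_zero_on_sdiff (Finset.range_mono (by omega)) ?_ ?_
  · intro n hn
    simp only [Finset.mem_sdiff, Finset.mem_range] at hn
    rw [wordSum_eq_zero_of_lt _ _ _ _ (by omega), mul_zero]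
  · intro n hn
    rw [Finset.mem_range] at hn
    obtain ⟨m, hm⟩ : ∃ m, h - n = m + 1 := ⟨h - n - 1, by omega⟩
    rw [hm, Nat.add_sub_cancel, Nat.add_sub_cancel, Zword_eq_wordSum m r r x rfl,
      wordSum_succ_succ_of_last_eq_zero _ _ _ _ (by simp)]
end

section
/- For any real numbers a_0,…,a_k, any real a, and any integers ℓ ≥ 0, k ≥ 0, the complete homogeneous symmetric polynomials satisfy h_ℓ(a_0 + a, a_1 + a, …, a_k + a) = ∑_{n=0}^{ℓ} C(ℓ+k, n) · a^n · h_{ℓ−n}(a_0,…,a_k), where C(ℓ+k,n) is the binomial coefficient. -/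
/-!
Splitting the weakly increasing words of length `m + 1` over `{0, …, k + 1}` by whether their last
letter is `k + 1` gives the recurrence `h_{m+1}^{k+1} = h_{m+1}^k + a_{k+1} h_m^{k+1}`
(`hsym_succ_succ`), where the superscript records the largest index. Together with `h_0^k = 1` and
`h_m^0 = a_0 ^ m` it determines `h`, so it suffices that the right-hand side of the shift formula
satisfies the same recurrence with `a_{k+1} + c` in place of `a_{k+1}`. That follows from Pascal's
rule, combined with the recurrence for the unshifted `h`; the case `k = 0` is the binomial theorem.
-/

/-- The complete homogeneous symmetric polynomial of degree `m` in the `k+1`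
variables `a 0, …, a k`:  `h_m(a_0,…,a_k) = ∑_{0 ≤ i_1 ≤ ⋯ ≤ i_m ≤ k} a_{i_1}⋯a_{i_m}`. -/
noncomputable def hsym (m k : ℕ) (a : ℕ → ℝ) : ℝ :=
  ∑ t ∈ (Finset.univ : Finset (Fin m → Fin (k + 1))).filter
      (fun t => ∀ i j : Fin m, i ≤ j → (t i : ℕ) ≤ (t j : ℕ)),
    ∏ i, a (t i)

theorem hsym_zero_left (k : ℕ) (a : ℕ → ℝ) : hsym 0 k a = 1 := by
  simp [hsym]

theorem hsym_zero_right (m : ℕ) (a : ℕ → ℝ) : hsym m 0 a = a 0 ^ m := by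
  simp [hsym]

/-- Weakly increasing words of length `m + 1` over `{0, …, k + 1}` either avoid the letter `k + 1`
or end with it. -/
theorem hsym_succ_succ (m k : ℕ) (a : ℕ → ℝ) :
    hsym (m + 1) (k + 1) a = hsym (m + 1) k a + a (k + 1) * hsym m (k + 1) a := by
  unfold hsym
  rw [← Finset.sum_filter_add_sum_filter_not _
    (fun t : Fin (m + 1) → Fin (k + 1 + 1) => t (Fin.last m) ≠ Fin.last (k + 1))]
  congr 1
  · symm
    refine Finset.sum_nbij (fun t i => (t i).castSucc) ?_ ?_ ?_ ?_
    · intro t ht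
      simpa [Fin.castSucc_ne_last] using ht
    · intro t _ t' _ h
      funext i
      exact Fin.castSucc_injective _ (congrFun h i)
    · intro t ht
      simp only [Finset.coe_filter, Finset.mem_filter, Finset.mem_univ, true_and,
        Set.mem_ofPred_eq] at ht
      obtain ⟨hm, hl⟩ := ht
      have hlt : ∀ i, (t i : ℕ) < k + 1 := fun i =>
        lt_of_le_of_lt (hm i _ (Fin.le_last i)) (Fin.val_lt_last hl)
      refine ⟨fun i => ⟨t i, hlt i⟩, ?_, ?_⟩
      · simpa using hm
      · funext i
        rfl
    · intro t _
      rfl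
  · rw [Finset.mul_sum]
    symm
    refine Finset.sum_nbij
      (fun t => (Fin.snoc t (Fin.last (k + 1)) : Fin (m + 1) → Fin (k + 1 + 1))) ?_ ?_ ?_ ?_
    · intro t ht
      simp only [Finset.mem_filter, Finset.mem_univ, true_and] at ht ⊢
      refine ⟨fun i j hij => ?_, by simp⟩
      induction j using Fin.lastCases with
      | last => simpa using Fin.is_le _
      | cast j =>
        induction i using Fin.lastCases with
        | last => exact absurd hij (not_le.mpr (Fin.castSucc_lt_last j))
        | cast i => simpa using ht i j (by simpa using hij)
    · intro t _ t' _ h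
      funext i
      simpa using congrFun h i.castSucc
    · intro t ht
      simp only [Finset.coe_filter, Finset.mem_filter, Finset.mem_univ, true_and,
        Set.mem_ofPred_eq, not_not] at ht
      obtain ⟨hm, hl⟩ := ht
      refine ⟨fun i => t i.castSucc, ?_, ?_⟩
      · simp only [Finset.coe_filter, Finset.mem_univ, true_and, Set.mem_ofPred_eq]
        exact fun i j hij => hm _ _ (by simpa using hij)
      · rw [← hl]
        exact Fin.snoc_init_self t
    · intro t _
      simp [Fin.prod_univ_castSucc, mul_comm]

/-- The right-hand side of the shift formula satisfies the recurrence of `hsym_succ_succ` for the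
shifted variables. -/
theorem shift_sum_succ_succ (l k : ℕ) (a : ℕ → ℝ) (c : ℝ) :
    ∑ n ∈ Finset.range (l + 1 + 1),
        ((l + 1 + (k + 1)).choose n : ℝ) * c ^ n * hsym (l + 1 - n) (k + 1) a
      = ∑ n ∈ Finset.range (l + 1 + 1),
          ((l + 1 + k).choose n : ℝ) * c ^ n * hsym (l + 1 - n) k a
        + (a (k + 1) + c) * ∑ n ∈ Finset.range (l + 1),
          ((l + (k + 1)).choose n : ℝ) * c ^ n * hsym (l - n) (k + 1) a := by
  have e : l + 1 + k = l + (k + 1) := by omega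
  have pascal : ∑ n ∈ Finset.range (l + 1 + 1),
        ((l + 1 + (k + 1)).choose n : ℝ) * c ^ n * hsym (l + 1 - n) (k + 1) a
      = ∑ n ∈ Finset.range (l + 1 + 1),
          ((l + (k + 1)).choose n : ℝ) * c ^ n * hsym (l + 1 - n) (k + 1) a
        + c * ∑ n ∈ Finset.range (l + 1),
          ((l + (k + 1)).choose n : ℝ) * c ^ n * hsym (l - n) (k + 1) a := by
    rw [Finset.sum_range_succ', Finset.sum_range_succ' _ (l + 1), Finset.mul_sum,
      add_right_comm (Finset.sum _ _), ← Finset.sum_add_distrib]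
    congr 1
    · refine Finset.sum_congr rfl fun n _ => ?_
      rw [show l + 1 + (k + 1) = l + (k + 1) + 1 by omega, Nat.choose_succ_succ,
        Nat.add_sub_add_right]
      push_cast
      ring
  rw [pascal, e, add_mul, ← add_assoc (Finset.sum _ _)]
  congr 1
  -- The top terms `n = l + 1` agree because `h_0 = 1` on both sides.
  rw [Finset.sum_range_succ, Finset.sum_range_succ _ (l + 1), Finset.mul_sum, add_right_comm (Finset.sum _ _),
    ← Finset.sum_add_distrib]
  congr 1
  · refine Finset.sum_congr rfl fun n hn => ?_
    rw [Nat.succ_sub (Finset.mem_range_succ_iff.mp hn), Nat.succ_eq_add_one, hsym_succ_succ]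
    ring
  · simp [hsym_zero_left]

/-- for any reals `a_0,…,a_k`, any real `a`, and `ℓ, k ≥ 0`,
`h_ℓ(a_0+a, …, a_k+a) = ∑_{n=0}^{ℓ} C(ℓ+k, n) aⁿ h_{ℓ−n}(a_0,…,a_k)`. -/
theorem hsym_shift (ℓ k : ℕ) (a : ℕ → ℝ) (c : ℝ) :
    hsym ℓ k (fun i => a i + c)
      = ∑ n ∈ Finset.range (ℓ + 1),
          ((ℓ + k).choose n : ℝ) * c ^ n * hsym (ℓ - n) k a := by
  induction k generalizing ℓ with
  | zero =>
    simp only [hsym_zero_right, add_zero]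
    rw [add_comm, add_pow]
    exact Finset.sum_congr rfl fun n _ => by ring
  | succ k ihk =>
    induction ℓ with
    | zero => simp [hsym_zero_left]
    | succ l ihl => rw [hsym_succ_succ, ihk, ihl, shift_sum_succ_succ]
end

section
/- For any real numbers y_0,…,y_k, any integers ℓ ≥ 1, k ≥ 0, any j with 1 ≤ j ≤ ℓ and any n with 0 ≤ n ≤ k, one has ∑_{λ ∈ Par_{k,ℓ}, λ_j = n} ∏_{i=1}^{ℓ} y_{λ_i} = y_n · h_{j−1}(y_n, y_{n+1}, …, y_k) · h_{ℓ−j}(y_0, y_1, …, y_n), where h_m denotes the complete homogeneous symmetric polynomial of degree m. -/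
/-- The tuple `n + s_{p-1}, …, n + s_0, n, t_{q-1}, …, t_0`. Both blocks are reversed because `hsym`
sums over nondecreasing tuples whereas partitions are nonincreasing. -/
def glue (k p q n : ℕ) (hn : n ≤ k) (s : Fin p → Fin (k - n + 1)) (t : Fin q → Fin (n + 1)) :
    Fin (p + 1 + q) → Fin (k + 1) := fun a =>
  if h : (a : ℕ) < p then ⟨n + s ⟨p - 1 - a, by omega⟩, by omega⟩
  else if h' : (a : ℕ) = p then ⟨n, by omega⟩
  else ⟨t ⟨p + q - a, by omega⟩, by omega⟩

section glue

variable {k p q n : ℕ} (hn : n ≤ k) (s : Fin p → Fin (k - n + 1)) (t : Fin q → Fin (n + 1))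

lemma glue_left (i : Fin p) (a : Fin (p + 1 + q)) (h : (a : ℕ) + i + 1 = p) :
    (glue k p q n hn s t a : ℕ) = n + s i := by
  have h1 : (a : ℕ) < p := by omega
  have h2 : (⟨p - 1 - a, by omega⟩ : Fin p) = i := Fin.ext (by simp only; omega)
  simp [glue, h1, h2]

lemma glue_mid (a : Fin (p + 1 + q)) (h : (a : ℕ) = p) :
    (glue k p q n hn s t a : ℕ) = n := by
  simp [glue, h]

lemma glue_right (i : Fin q) (a : Fin (p + 1 + q)) (h : (a : ℕ) + i = p + q) :
    (glue k p q n hn s t a : ℕ) = t i := by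
  have h1 : ¬ (a : ℕ) < p := by omega
  have h1' : ¬ (a : ℕ) = p := by omega
  have h2 : (⟨p + q - a, by omega⟩ : Fin q) = i := Fin.ext (by simp only; omega)
  simp [glue, h1, h1', h2]

lemma glue_prod (y : ℕ → ℝ) :
    ∏ a, y (glue k p q n hn s t a) = y n * (∏ i, y (n + s i)) * ∏ i, y (t i) := by
  rw [Fin.prod_univ_add, Fin.prod_univ_add, ← Equiv.prod_comp Fin.revPerm (fun i => y (n + s i)),
    ← Equiv.prod_comp Fin.revPerm (fun i => y (t i)), mul_comm (y n)]
  congr 1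
  · congr 1
    · refine Finset.prod_congr rfl fun i _ => ?_
      rw [glue_left hn s t (Fin.revPerm i) _ (by simp; omega)]
    · simp [glue_mid]
  · refine Finset.prod_congr rfl fun i _ => ?_
    rw [glue_right hn s t (Fin.revPerm i) _ (by simp; omega)]

lemma glue_antitone (hs : ∀ i j : Fin p, i ≤ j → (s i : ℕ) ≤ (s j : ℕ))
    (ht : ∀ i j : Fin q, i ≤ j → (t i : ℕ) ≤ (t j : ℕ)) (a b : Fin (p + 1 + q)) (hab : a ≤ b) :
    (glue k p q n hn s t b : ℕ) ≤ glue k p q n hn s t a := by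
  have hab' : (a : ℕ) ≤ b := hab
  -- Each position lies left of, at, or right of the junction, with its value determined accordingly.
  have key (c : Fin (p + 1 + q)) :
      (∃ i : Fin p, (c : ℕ) + i + 1 = p) ∨ (c : ℕ) = p ∨ ∃ i : Fin q, (c : ℕ) + i = p + q := by
    rcases lt_trichotomy (c : ℕ) p with h | h | h
    · exact Or.inl ⟨⟨p - 1 - c, by omega⟩, by simp only; omega⟩
    · exact Or.inr (Or.inl h)
    · exact Or.inr (Or.inr ⟨⟨p + q - c, by omega⟩, by simp only; omega⟩)
  rcases key a with ⟨i, hi⟩ | hi | ⟨i, hi⟩ <;> rcases key b with ⟨j, hj⟩ | hj | ⟨j, hj⟩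
  · rw [glue_left hn s t i a hi, glue_left hn s t j b hj]
    have := hs j i (Fin.le_def.2 (by omega))
    omega
  · rw [glue_left hn s t i a hi, glue_mid hn s t b hj]; omega
  · rw [glue_left hn s t i a hi, glue_right hn s t j b hj]; omega
  · omega
  · rw [glue_mid hn s t a hi, glue_mid hn s t b hj]
  · rw [glue_mid hn s t a hi, glue_right hn s t j b hj]; omega
  · omega
  · omega
  · rw [glue_right hn s t i a hi, glue_right hn s t j b hj]
    exact ht j i (Fin.le_def.2 (by omega))

end glue

/-- The marginal identity for `ℓ = p + 1 + q` and `j = p + 1`, which avoids natural-number subtraction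
in the block lengths; `glue` is a bijection between the index sets of the two sides. -/
lemma glue_marginal (k p q n : ℕ) (hn : n ≤ k) (y : ℕ → ℝ) :
    ∑ lam ∈ (Finset.univ : Finset (Fin (p + 1 + q) → Fin (k + 1))).filter
        (fun lam => (∀ i i' : Fin (p + 1 + q), i ≤ i' → (lam i' : ℕ) ≤ (lam i : ℕ)) ∧
          (lam ⟨p, by omega⟩ : ℕ) = n),
      ∏ i, y (lam i)
      = y n * hsym p (k - n) (fun i => y (n + i)) * hsym q n y := by
  rw [mul_assoc, hsym, hsym, Finset.sum_mul_sum, ← Finset.sum_product', Finset.mul_sum]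
  symm
  refine Finset.sum_bij (fun x _ => glue k p q n hn x.1 x.2) ?_ ?_ ?_ ?_
  · rintro ⟨s, t⟩ h
    simp only [Finset.mem_product, Finset.mem_filter, Finset.mem_univ, true_and] at h ⊢
    exact ⟨glue_antitone hn s t h.1 h.2, glue_mid hn s t _ rfl⟩
  · rintro ⟨s, t⟩ - ⟨s', t'⟩ - h
    simp only at h
    refine Prod.ext (funext fun i => Fin.ext ?_) (funext fun i => Fin.ext ?_)
    · have e := congrArg Fin.val (congrFun h ⟨p - 1 - i, by omega⟩)
      rw [glue_left hn s t i _ (by simp only; omega),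
        glue_left hn s' t' i _ (by simp only; omega)] at e
      simpa using e
    · have e := congrArg Fin.val (congrFun h ⟨p + q - i, by omega⟩)
      rwa [glue_right hn s t i _ (by simp only; omega),
        glue_right hn s' t' i _ (by simp only; omega)] at e
  · intro lam h
    simp only [Finset.mem_filter, Finset.mem_univ, true_and] at h
    obtain ⟨hm, hp⟩ := h
    have hge (a : Fin (p + 1 + q)) (ha : (a : ℕ) ≤ p) : n ≤ (lam a : ℕ) := by
      have := hm a ⟨p, by omega⟩ (Fin.le_def.2 ha)
      omega
    have hle (a : Fin (p + 1 + q)) (ha : p ≤ (a : ℕ)) : (lam a : ℕ) ≤ n := by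
      have := hm ⟨p, by omega⟩ a (Fin.le_def.2 ha)
      omega
    refine ⟨(fun i => ⟨lam ⟨p - 1 - i, by omega⟩ - n, by omega⟩,
      fun i => ⟨lam ⟨p + q - i, by omega⟩, Nat.lt_succ_of_le (hle _ (by simp only; omega))⟩),
      ?_, ?_⟩
    · simp only [Finset.mem_product, Finset.mem_filter, Finset.mem_univ, true_and]
      refine ⟨fun i j hij => Nat.sub_le_sub_right (hm _ _ ?_) _, fun i j hij => hm _ _ ?_⟩ <;>
      · rw [Fin.le_def] at hij ⊢
        simp only
        omega
    · funext a
      apply Fin.ext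
      rcases lt_trichotomy (a : ℕ) p with h | h | h
      · rw [glue_left hn _ _ ⟨p - 1 - a, by omega⟩ a (by simp only; omega)]
        have e : (⟨p - 1 - (p - 1 - a), by omega⟩ : Fin (p + 1 + q)) = a :=
          Fin.ext (by simp only; omega)
        have := hge a h.le
        simp only [e]
        omega
      · rw [glue_mid hn _ _ a h, ← hp]
        congr 2
        exact Fin.ext h.symm
      · rw [glue_right hn _ _ ⟨p + q - a, by omega⟩ a (by simp only; omega)]
        have e : (⟨p + q - (p + q - a), by omega⟩ : Fin (p + 1 + q)) = a :=
          Fin.ext (by simp only; omega)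
        simp only [e]
  · rintro ⟨s, t⟩ -
    rw [glue_prod, mul_assoc]

/-- for any reals `y_0,…,y_k`, `1 ≤ j ≤ ℓ`, `0 ≤ n ≤ k`, the sum of
`∏_{i=1}^ℓ y_{λ_i}` over partitions `λ ∈ Par_{k,ℓ}` with `λ_j = n` equals
`y_n · h_{j−1}(y_n,…,y_k) · h_{ℓ−j}(y_0,…,y_n)`.  Partitions are encoded as
nonincreasing tuples `Fin ℓ → Fin (k+1)`. -/
theorem par_marginal (k ℓ j n : ℕ) (hj : 1 ≤ j) (hjl : j ≤ ℓ) (hn : n ≤ k)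
    (y : ℕ → ℝ) :
    ∑ lam ∈ (Finset.univ : Finset (Fin ℓ → Fin (k + 1))).filter
        (fun lam => (∀ i i' : Fin ℓ, i ≤ i' → (lam i' : ℕ) ≤ (lam i : ℕ)) ∧
          (lam ⟨j - 1, by omega⟩ : ℕ) = n),
      ∏ i, y (lam i)
      = y n * hsym (j - 1) (k - n) (fun i => y (n + i)) * hsym (ℓ - j) n y := by
  obtain ⟨p, rfl⟩ : ∃ p, j = p + 1 := ⟨j - 1, by omega⟩
  obtain ⟨q, rfl⟩ : ∃ q, ℓ = p + 1 + q := ⟨ℓ - (p + 1), by omega⟩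
  have h := glue_marginal k p q n hn y
  simpa only [Nat.add_sub_cancel, Nat.add_sub_cancel_left] using h
end

section
/- If x_i > 0 for all i = 0,…,k, then the enriched chain on S(H,K) is irreducible: for any two set partitions σ, τ ∈ S(H,K) there exists an integer n ≥ 0 such that the (σ,τ) entry of the n-th power of the enriched transition matrix is strictly positive. -/
/-!
Label the blocks of a partition by `0, …, k`, so that a state becomes a word of length `H` in which
every label occurs. One step of the chain deletes the first letter and appends a letter, and it has
positive probability exactly when the new window still contains every label: when the deleted letter
was the only one with its label, the appended letter is forced to carry that label, and otherwise it
is free (`enrichedP_windowPartition_pos`). So it suffices to find one long word that starts with a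
word for `σ`, ends with a word for `τ`, and all of whose windows of length `H` contain every label.

Choose one representative in each block and number the blocks in increasing order of their
representatives; the representative of block `c` then lies between `c + 1` and `H - K + c + 1`
(`exists_labelling`). With `w` and `v` the words obtained in this way from `σ` and `τ`, the word
`w · 0 1 ⋯ k · v` has the required property (`exists_joining_word`): the two bounds ensure that,
among the three marked occurrences of a label `c`, one in each part of the word, consecutive ones
are at most `H` apart.
-/

/-- `σ↓`: remove the element 1 from the set partition `σ` (deleting its block if it
becomes empty) and shift all remaining elements down by 1. -/
def downShift (σ : Finset (Finset ℕ)) : Finset (Finset ℕ) :=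
  (σ.image fun b => (b.erase 1).image (· - 1)).erase ∅

/-- `I_i(τ)`: insert the element `v` into the `(i+1)`-th block of `τ`, blocks being
numbered (from `i = 0`) in increasing order of their maxima. -/
def insertIntoBlock (v i : ℕ) (τ : Finset (Finset ℕ)) : Finset (Finset ℕ) :=
  τ.image fun b =>
    if (τ.filter fun c => c.sup id < b.sup id).card = i then insert v b else b

/-- Transition probability of the enriched chain on set partitions of `{1,…,h+1}`
into `k+1` blocks: if `{1}` is a block of `σ`, go to `σ↓ ∪ {{h+1}}` with probability
1; otherwise go to `I_i(σ↓)` with probability `x i` for `0 ≤ i ≤ k`. -/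
noncomputable def enrichedP (h k : ℕ) (x : ℕ → ℝ) (σ τ : Finset (Finset ℕ)) : ℝ :=
  if ({1} : Finset ℕ) ∈ σ then
    (if τ = insert ({h + 1} : Finset ℕ) (downShift σ) then 1 else 0)
  else
    ∑ i ∈ Finset.range (k + 1),
      if τ = insertIntoBlock (h + 1) i (downShift σ) then x i else 0

/-- `σ` is a partition of the set `{1,…,H}` into exactly `K` nonempty blocks. -/
def IsSP (H K : ℕ) (σ : Finset (Finset ℕ)) : Prop :=
  (∀ b ∈ σ, b.Nonempty) ∧ (∀ b₁ ∈ σ, ∀ b₂ ∈ σ, b₁ ≠ b₂ → Disjoint b₁ b₂) ∧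
    σ.sup id = Finset.Icc 1 H ∧ σ.card = K

instance (H K : ℕ) : DecidablePred (IsSP H K) := fun σ => by
  unfold IsSP; infer_instance

/-- The (finite) set `S(H,K)` of partitions of `{1,…,H}` into `K` nonempty blocks. -/
def spFinset (H K : ℕ) : Finset (Finset (Finset ℕ)) :=
  ((Finset.Icc 1 H).powerset.powerset).filter (IsSP H K)

/-- The transition matrix of the enriched chain, indexed by `S(h+1,k+1)`. -/
noncomputable def enrichedM (h k : ℕ) (x : ℕ → ℝ) :
    Matrix {σ // σ ∈ spFinset (h + 1) (k + 1)} {σ // σ ∈ spFinset (h + 1) (k + 1)} ℝ :=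
  Matrix.of fun σ τ => enrichedP h k x σ.1 τ.1

/-! ### Set partitions and words -/

/-- The set partition of `{1,…,H}` into the blocks `{j | f j = c}`, `c < K`, read off from a
labelling `f` of the positions. It has exactly `K` nonempty blocks when every label occurs. -/
def windowPartition (H K : ℕ) (f : ℕ → ℕ) : Finset (Finset ℕ) :=
  (Finset.range K).image fun c => (Finset.Icc 1 H).filter fun j => f j = c

lemma sup_id_mem {b : Finset ℕ} (hb : b.Nonempty) : b.sup id ∈ b := by
  obtain ⟨i, hi, h⟩ := Finset.exists_mem_eq_sup b hb id
  rw [h]; exact hi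

lemma isSP_windowPartition {H K : ℕ} {f : ℕ → ℕ} (hlt : ∀ j ∈ Finset.Icc 1 H, f j < K)
    (hsurj : ∀ c < K, ∃ j ∈ Finset.Icc 1 H, f j = c) : IsSP H K (windowPartition H K f) := by
  refine ⟨?_, ?_, ?_, ?_⟩
  · intro b hb
    simp only [windowPartition, Finset.mem_image, Finset.mem_range] at hb
    obtain ⟨c, hc, rfl⟩ := hb
    obtain ⟨j, hj, hjc⟩ := hsurj c hc
    exact ⟨j, by simp [hjc, Finset.mem_Icc.1 hj]⟩
  · intro b₁ h₁ b₂ h₂ hne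
    simp only [windowPartition, Finset.mem_image, Finset.mem_range] at h₁ h₂
    obtain ⟨c, hc, rfl⟩ := h₁
    obtain ⟨d, hd, rfl⟩ := h₂
    rw [Finset.disjoint_left]
    intro j h1 h2
    simp only [Finset.mem_filter] at h1 h2
    apply hne
    rw [← h1.2, ← h2.2]
  · ext j
    simp only [windowPartition, Finset.mem_sup, Finset.mem_image, Finset.mem_range, id]
    constructor
    · rintro ⟨_, ⟨c, _, rfl⟩, hj⟩
      exact (Finset.mem_filter.1 hj).1
    · intro hj
      exact ⟨_, ⟨f j, hlt j hj, rfl⟩, by simpa using hj⟩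
  · rw [windowPartition, Finset.card_image_of_injOn, Finset.card_range]
    intro c hc d hd hcd
    obtain ⟨j, hj, hjc⟩ := hsurj c (by simpa using hc)
    have : j ∈ (Finset.Icc 1 H).filter fun j => f j = d := by
      have hcd' := hcd
      beta_reduce at hcd'
      rw [← hcd']; simp [hjc, Finset.mem_Icc.1 hj]
    rw [← hjc, (Finset.mem_filter.1 this).2]

lemma mem_spFinset {H K : ℕ} {σ : Finset (Finset ℕ)} : σ ∈ spFinset H K ↔ IsSP H K σ := by
  rw [spFinset, Finset.mem_filter, and_iff_right_iff_imp]
  intro hσ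
  rw [Finset.mem_powerset]
  intro b hb
  rw [Finset.mem_powerset, ← hσ.2.2.1]
  exact Finset.le_sup (f := id) hb

/-- Every set partition is read off from a labelling in which label `c` has a marked occurrence
`L c` (here, the maximum of the block) with `c + 1 ≤ L c ≤ H - K + c + 1`. -/
lemma exists_labelling {H K : ℕ} {σ : Finset (Finset ℕ)} (hσ : IsSP H K σ) :
    ∃ g L : ℕ → ℕ, (∀ c < K, c + 1 ≤ L c ∧ L c + K ≤ H + c + 1 ∧ g (L c) = c) ∧
      (∀ j ∈ Finset.Icc 1 H, g j < K) ∧ σ = windowPartition H K g := by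
  obtain ⟨hne, hdis, hsup, hcard⟩ := hσ
  have heq : ∀ b ∈ σ, ∀ b' ∈ σ, ∀ j, j ∈ b → j ∈ b' → b = b' := by
    intro b hb b' hb' j h1 h2
    by_contra hn
    exact Finset.disjoint_left.1 (hdis b hb b' hb' hn) h1 h2
  have hmem : ∀ j, j ∈ Finset.Icc 1 H ↔ ∃ b ∈ σ, j ∈ b := by
    intro j; rw [← hsup, Finset.mem_sup]; rfl
  have hinj : ∀ b ∈ σ, ∀ b' ∈ σ, b.sup id = b'.sup id → b = b' := by
    intro b hb b' hb' h
    exact heq b hb b' hb' _ (sup_id_mem (hne b hb)) (h ▸ sup_id_mem (hne b' hb'))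
  have hS : (σ.image fun b => b.sup id).card = K := by
    rw [Finset.card_image_of_injOn, hcard]
    intro b hb b' hb' h
    exact hinj b hb b' hb' h
  obtain ⟨L, hL⟩ : ∃ L : ℕ → ℕ, ∀ c (hc : c < K),
      L c = (σ.image fun b => b.sup id).orderEmbOfFin hS ⟨c, hc⟩ :=
    ⟨fun c => if hc : c < K then (σ.image fun b => b.sup id).orderEmbOfFin hS ⟨c, hc⟩ else 0,
      fun c hc => by simp [hc]⟩
  have hLmono : ∀ c d, d < K → c < d → L c < L d := by
    intro c d hd hcd
    rw [hL c (hcd.trans hd), hL d hd, OrderEmbedding.lt_iff_lt]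
    exact hcd
  have hLinj : ∀ c < K, ∀ d < K, L c = L d → c = d := by
    intro c hc d hd h
    rcases lt_trichotomy c d with h' | h' | h'
    · exact absurd h (hLmono c d hd h').ne
    · exact h'
    · exact absurd h (hLmono d c hc h').ne'
  have hLmem : ∀ c < K, ∃ b ∈ σ, b.sup id = L c := by
    intro c hc
    have := Finset.orderEmbOfFin_mem (σ.image fun b => b.sup id) hS ⟨c, hc⟩
    rw [← hL c hc] at this
    simpa using this
  have hLsurj : ∀ b ∈ σ, ∃ c < K, b.sup id = L c := by
    intro b hb
    have h1 : b.sup id ∈ Set.range ((σ.image fun b => b.sup id).orderEmbOfFin hS) := by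
      rw [Finset.range_orderEmbOfFin]
      exact Finset.mem_coe.2 (Finset.mem_image_of_mem _ hb)
    obtain ⟨c, hc⟩ := h1
    exact ⟨c, c.2, by rw [hL c c.2]; exact hc.symm⟩
  have hLIcc : ∀ c < K, 1 ≤ L c ∧ L c ≤ H := by
    intro c hc
    obtain ⟨b, hb, h⟩ := hLmem c hc
    exact Finset.mem_Icc.1 ((hmem _).2 ⟨b, hb, h ▸ sup_id_mem (hne b hb)⟩)
  have hlow : ∀ c, c < K → c + 1 ≤ L c := by
    intro c
    induction c with
    | zero => intro hc; exact (hLIcc 0 hc).1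
    | succ c ih =>
      intro hc
      have := hLmono c (c + 1) hc (by omega)
      have := ih (by omega)
      omega
  have hup : ∀ d c, c + d + 1 = K → L c + d ≤ H := by
    intro d
    induction d with
    | zero => intro c hc; exact (hLIcc c (by omega)).2
    | succ d ih =>
      intro c hc
      have := hLmono c (c + 1) (by omega) (by omega)
      have := ih (c + 1) (by omega)
      omega
  have hex : ∀ j, ∃ c, j ∈ Finset.Icc 1 H → c < K ∧ ∃ b ∈ σ, j ∈ b ∧ b.sup id = L c := by
    intro j
    by_cases hj : j ∈ Finset.Icc 1 H
    · obtain ⟨b, hb, hjb⟩ := (hmem j).1 hj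
      obtain ⟨c, hc, h⟩ := hLsurj b hb
      exact ⟨c, fun _ => ⟨hc, b, hb, hjb, h⟩⟩
    · exact ⟨0, fun h => absurd h hj⟩
  choose g hg using hex
  have hgb : ∀ b ∈ σ, ∀ c < K, b.sup id = L c → ∀ j ∈ b, g j = c := by
    intro b hb c hc h j hj
    obtain ⟨h1, b', hb', hj', h'⟩ := hg j ((hmem j).2 ⟨b, hb, hj⟩)
    obtain rfl := heq b hb b' hb' j hj hj'
    exact hLinj _ h1 _ hc (h' ▸ h)
  have hfib : ∀ b ∈ σ, ∀ c < K, b.sup id = L c →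
      (Finset.Icc 1 H).filter (fun j => g j = c) = b := by
    intro b hb c hc h
    ext j
    rw [Finset.mem_filter]
    constructor
    · rintro ⟨hj, rfl⟩
      obtain ⟨h1, b', hb', hj', h'⟩ := hg j hj
      rw [hinj b hb b' hb' (h.trans h'.symm)]
      exact hj'
    · intro hj
      exact ⟨(hmem j).2 ⟨b, hb, hj⟩, hgb b hb c hc h j hj⟩
  refine ⟨g, L, ?_, fun j hj => (hg j hj).1, ?_⟩
  · intro c hc
    refine ⟨hlow c hc, ?_, ?_⟩
    · have := hup (K - c - 1) c (by omega)
      omega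
    · obtain ⟨b, hb, h⟩ := hLmem c hc
      exact hgb b hb c hc h _ (h ▸ sup_id_mem (hne b hb))
  · ext b
    simp only [windowPartition, Finset.mem_image, Finset.mem_range]
    constructor
    · intro hb
      obtain ⟨c, hc, h⟩ := hLsurj b hb
      exact ⟨c, hc, hfib b hb c hc h⟩
    · rintro ⟨c, hc, rfl⟩
      obtain ⟨b, hb, h⟩ := hLmem c hc
      rw [hfib b hb c hc h]
      exact hb

/-! ### The joining word -/

/-- A word of length `2H + K` that starts with a word for `σ`, ends with a word for `τ`, and all
of whose windows of length `H` contain every label. -/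
lemma exists_joining_word {H K : ℕ} {σ τ : Finset (Finset ℕ)}
    (hσ : IsSP H K σ) (hτ : IsSP H K τ) :
    ∃ f : ℕ → ℕ, (∀ j, 1 ≤ j → j ≤ H + K + H → f j < K) ∧
      (∀ n ≤ H + K, ∀ c < K, ∃ j ∈ Finset.Icc 1 H, f (n + j) = c) ∧
      windowPartition H K (fun j => f (0 + j)) = σ ∧
      windowPartition H K (fun j => f (H + K + j)) = τ := by
  obtain ⟨g, L, hL, hg, rfl⟩ := exists_labelling hσ
  obtain ⟨g', L', hL', hg', rfl⟩ := exists_labelling hτ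
  obtain ⟨f, hf1, hf2, hf3⟩ : ∃ f : ℕ → ℕ, (∀ j ≤ H, f j = g j) ∧
      (∀ i < K, f (H + 1 + i) = i) ∧ (∀ j, 1 ≤ j → f (H + K + j) = g' j) := by
    refine ⟨fun j => if j ≤ H then g j else if j ≤ H + K then j - H - 1 else g' (j - (H + K)),
      ?_, ?_, ?_⟩
    · intro j hj; simp [hj]
    · intro i hi
      have h1 : ¬ H + 1 + i ≤ H := by omega
      have h2 : H + 1 + i ≤ H + K := by omega
      simp only [h1, h2, if_true, if_false]; omega
    · intro j hj
      have h1 : ¬ H + K + j ≤ H := by omega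
      have h2 : ¬ H + K + j ≤ H + K := by omega
      simp only [h1, h2, if_false]; congr 1; omega
  refine ⟨f, ?_, ?_, ?_, ?_⟩
  · intro j hj1 hj2
    rcases le_or_gt j H with h | h
    · rw [hf1 j h]; exact hg j (Finset.mem_Icc.2 ⟨hj1, h⟩)
    rcases le_or_gt j (H + K) with h' | h'
    · obtain ⟨i, rfl⟩ := Nat.exists_eq_add_of_le (show H + 1 ≤ j by omega)
      rw [hf2 i (by omega)]; omega
    · obtain ⟨i, rfl⟩ := Nat.exists_eq_add_of_le (show H + K ≤ j by omega)
      rw [hf3 i (by omega)]; exact hg' i (Finset.mem_Icc.2 ⟨by omega, by omega⟩)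
  · -- The first occurrence after `n` among the three marked ones lies in the window at `n`.
    intro n hn c hc
    obtain ⟨ha, hb, hgc⟩ := hL c hc
    obtain ⟨ha', hb', hgc'⟩ := hL' c hc
    rcases lt_or_ge n (L c) with h | h
    · refine ⟨L c - n, Finset.mem_Icc.2 ⟨by omega, by omega⟩, ?_⟩
      rw [show n + (L c - n) = L c by omega, hf1 _ (by omega), hgc]
    rcases le_or_gt n (H + c) with h' | h'
    · refine ⟨H + 1 + c - n, Finset.mem_Icc.2 ⟨by omega, by omega⟩, ?_⟩
      rw [show n + (H + 1 + c - n) = H + 1 + c by omega, hf2 c hc]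
    · refine ⟨H + K + L' c - n, Finset.mem_Icc.2 ⟨by omega, by omega⟩, ?_⟩
      rw [show n + (H + K + L' c - n) = H + K + L' c by omega, hf3 _ (by omega), hgc']
  · unfold windowPartition
    congr 1; funext c
    apply Finset.filter_congr
    intro j hj
    beta_reduce
    rw [Nat.zero_add, hf1 j (Finset.mem_Icc.1 hj).2]
  · unfold windowPartition
    congr 1; funext c
    apply Finset.filter_congr
    intro j hj
    beta_reduce
    rw [hf3 j (Finset.mem_Icc.1 hj).1]

/-! ### Sliding the window by one step -/

lemma downShift_windowPartition (h K : ℕ) (f : ℕ → ℕ) :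
    downShift (windowPartition (h + 1) K f) =
      (windowPartition h K fun j => f (1 + j)).erase ∅ := by
  unfold downShift windowPartition
  rw [Finset.image_image]
  congr 2
  funext c
  ext j
  simp only [Function.comp, Finset.mem_image, Finset.mem_erase, Finset.mem_filter, Finset.mem_Icc]
  constructor
  · rintro ⟨i, ⟨h1, ⟨h2, h3⟩, h4⟩, rfl⟩
    exact ⟨⟨by omega, by omega⟩, by rw [← h4]; congr 1; omega⟩
  · rintro ⟨⟨h1, h2⟩, h3⟩
    exact ⟨1 + j, ⟨by omega, ⟨by omega, by omega⟩, h3⟩, by omega⟩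

/-- If two consecutive windows of a word both contain every label, the chain moves from the first
to the second with positive probability. -/
lemma enrichedP_windowPartition_pos {h k : ℕ} {x : ℕ → ℝ} (hpos : ∀ i, i ≤ k → 0 < x i)
    {f : ℕ → ℕ} (hlt : f (h + 2) < k + 1)
    (hs : ∀ c < k + 1, ∃ j ∈ Finset.Icc 1 (h + 1), f j = c)
    (hs' : ∀ c < k + 1, ∃ j ∈ Finset.Icc 1 (h + 1), f (1 + j) = c) :
    0 < enrichedP h k x (windowPartition (h + 1) (k + 1) f)
      (windowPartition (h + 1) (k + 1) fun j => f (1 + j)) := by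
  -- `D c` is block `c` of the common part of the two windows, without its last position `h + 1`.
  set D : ℕ → Finset ℕ := fun c => (Finset.Icc 1 h).filter fun j => f (1 + j) = c with hD
  set a := f (h + 2) with ha
  have hC : ∀ c, (Finset.Icc 1 (h + 1)).filter (fun j => f (1 + j) = c) =
      if c = a then insert (h + 1) (D c) else D c := by
    intro c
    have hlast : f (1 + (h + 1)) = a := by rw [ha]; congr 1; omega
    rw [← Finset.insert_Icc_right_eq_Icc_add_one (by omega : 1 ≤ h + 1), Finset.filter_insert,
      hlast]
    by_cases hca : c = a
    · rw [if_pos hca, if_pos hca.symm]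
    · rw [if_neg hca, if_neg (Ne.symm hca)]
  have hτ : (windowPartition (h + 1) (k + 1) fun j => f (1 + j)) =
      (Finset.range (k + 1)).image fun c => if c = a then insert (h + 1) (D c) else D c := by
    unfold windowPartition
    congr 1; funext c; exact hC c
  have hdown : downShift (windowPartition (h + 1) (k + 1) f) =
      ((Finset.range (k + 1)).image D).erase ∅ := downShift_windowPartition h (k + 1) f
  have hDne' : ∀ c < k + 1, c ≠ a → (D c).Nonempty := by
    intro c hc hca
    obtain ⟨j, hj, hjc⟩ := hs' c hc
    have := hC c
    rw [if_neg hca] at this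
    exact ⟨j, by rw [← this]; exact Finset.mem_filter.2 ⟨hj, hjc⟩⟩
  unfold enrichedP
  rw [hdown, hτ]
  split_ifs with h1 h2
  · exact one_pos
  · -- The block deleted from the first window is the one that the last letter has to renew.
    exfalso
    apply h2
    simp only [windowPartition, Finset.mem_image, Finset.mem_range] at h1
    obtain ⟨c, hc, hc1⟩ := h1
    have hDc : D c = ∅ := by
      rw [Finset.eq_empty_iff_forall_notMem]
      intro j hj
      obtain ⟨hj, hjc⟩ := Finset.mem_filter.1 hj
      rw [Finset.mem_Icc] at hj
      have : 1 + j ∈ ({1} : Finset ℕ) := by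
        rw [← hc1]; exact Finset.mem_filter.2 ⟨Finset.mem_Icc.2 ⟨by omega, by omega⟩, hjc⟩
      rw [Finset.mem_singleton] at this
      omega
    have hca : c = a := by
      by_contra hca
      exact (hDne' c hc hca).ne_empty hDc
    subst hca
    ext b
    simp only [Finset.mem_image, Finset.mem_range, Finset.mem_insert, Finset.mem_erase]
    constructor
    · rintro ⟨d, hd, rfl⟩
      split_ifs with hda
      · left; rw [hda, hDc]
        rfl
      · right; exact ⟨(hDne' d hd hda).ne_empty, d, hd, rfl⟩
    · rintro (rfl | ⟨hb, d, hd, rfl⟩)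
      · exact ⟨_, hc, by rw [if_pos rfl, hDc]; rfl⟩
      · refine ⟨d, hd, if_neg ?_⟩
        rintro rfl
        exact hb hDc
  · have hDne : ∀ c < k + 1, (D c).Nonempty := by
      intro c hc
      by_contra hn
      rw [Finset.not_nonempty_iff_eq_empty] at hn
      apply h1
      simp only [windowPartition, Finset.mem_image, Finset.mem_range]
      refine ⟨c, hc, ?_⟩
      have hone : ∀ j ∈ Finset.Icc 1 (h + 1), f j = c → j = 1 := by
        intro j hj hjc
        rw [Finset.mem_Icc] at hj
        by_contra hj1
        have : j - 1 ∈ D c := by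
          refine Finset.mem_filter.2 ⟨Finset.mem_Icc.2 ⟨by omega, by omega⟩, ?_⟩
          rw [← hjc]; congr 1; omega
        rw [hn] at this
        exact Finset.notMem_empty _ this
      obtain ⟨j, hj, hjc⟩ := hs c hc
      obtain rfl := hone j hj hjc
      ext i
      rw [Finset.mem_filter, Finset.mem_singleton]
      exact ⟨fun hi => hone i hi.1 hi.2, by rintro rfl; exact ⟨hj, hjc⟩⟩
    have hsup : ∀ c < k + 1, ∀ d < k + 1, (D c).sup id = (D d).sup id → c = d := by
      intro c hc d hd hcd
      have h1 := sup_id_mem (hDne c hc)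
      have h2 := sup_id_mem (hDne d hd)
      rw [← hcd] at h2
      rw [← (Finset.mem_filter.1 h1).2, ← (Finset.mem_filter.1 h2).2]
    have herase : ((Finset.range (k + 1)).image D).erase ∅ = (Finset.range (k + 1)).image D := by
      apply Finset.erase_eq_of_notMem
      intro hm
      obtain ⟨c, hc, he⟩ := Finset.mem_image.1 hm
      exact (hDne c (Finset.mem_range.1 hc)).ne_empty he
    rw [herase]
    set T := (Finset.range (k + 1)).image D with hT
    have hDT : ∀ c < k + 1, D c ∈ T := fun c hc =>
      Finset.mem_image_of_mem _ (Finset.mem_range.2 hc)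
    -- The rank of a block in the order of maxima determines the block.
    have hrank : ∀ c < k + 1, ∀ d < k + 1, (D c).sup id < (D d).sup id →
        (T.filter fun b => b.sup id < (D c).sup id).card <
          (T.filter fun b => b.sup id < (D d).sup id).card := by
      intro c hc d hd hcd
      apply Finset.card_lt_card
      rw [Finset.ssubset_iff_of_subset]
      · exact ⟨D c, Finset.mem_filter.2 ⟨hDT c hc, hcd⟩,
          fun hm => lt_irrefl _ (Finset.mem_filter.1 hm).2⟩
      · intro b hb
        obtain ⟨hb, hb'⟩ := Finset.mem_filter.1 hb
        exact Finset.mem_filter.2 ⟨hb, hb'.trans hcd⟩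
    set i := (T.filter fun b => b.sup id < (D a).sup id).card with hi
    have hik : i < k + 1 := by
      have h1 : i < T.card := by
        apply Finset.card_lt_card
        rw [Finset.ssubset_iff_of_subset (Finset.filter_subset _ _)]
        exact ⟨D a, hDT a hlt, fun hm => lt_irrefl _ (Finset.mem_filter.1 hm).2⟩
      have h2 : T.card ≤ (Finset.range (k + 1)).card := Finset.card_image_le
      rw [Finset.card_range] at h2
      omega
    have hiff : ∀ c < k + 1,
        (T.filter fun b => b.sup id < (D c).sup id).card = i ↔ c = a := by
      intro c hc
      constructor
      · intro he
        rcases lt_trichotomy ((D c).sup id) ((D a).sup id) with h' | h' | h'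
        · exact absurd he (hrank c hc a hlt h').ne
        · exact hsup c hc a hlt h'
        · exact absurd he (hrank a hlt c hc h').ne'
      · rintro rfl; rfl
    have hins : (Finset.range (k + 1)).image
        (fun c => if c = a then insert (h + 1) (D c) else D c) =
        insertIntoBlock (h + 1) i T := by
      unfold insertIntoBlock
      conv_rhs => rw [hT, Finset.image_image]
      apply Finset.image_congr
      intro c hc
      have hc' : c < k + 1 := by simpa using hc
      simp only [Function.comp]
      exact if_congr (hiff c hc').symm rfl rfl
    refine Finset.sum_pos' (fun j hj => ?_) ⟨i, Finset.mem_range.2 hik, ?_⟩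
    · have := hpos j (by have := Finset.mem_range.1 hj; omega)
      split_ifs
      · exact this.le
      · exact le_rfl
    · rw [if_pos hins]
      exact hpos i (by omega)

/-! ### Positivity of the matrix powers -/

lemma enrichedP_nonneg {h k : ℕ} {x : ℕ → ℝ} (hx : ∀ i, i ≤ k → 0 ≤ x i)
    (σ τ : Finset (Finset ℕ)) : 0 ≤ enrichedP h k x σ τ := by
  unfold enrichedP
  split_ifs
  · exact zero_le_one
  · exact le_rfl
  · refine Finset.sum_nonneg fun i hi => ?_
    have := hx i (by have := Finset.mem_range.1 hi; omega)
    split_ifs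
    · exact this
    · exact le_rfl

lemma enrichedM_pow_nonneg {h k : ℕ} {x : ℕ → ℝ} (hx : ∀ i, i ≤ k → 0 ≤ x i) (n : ℕ)
    (σ τ : {σ // σ ∈ spFinset (h + 1) (k + 1)}) : 0 ≤ (enrichedM h k x ^ n) σ τ := by
  induction n generalizing τ with
  | zero =>
    rw [pow_zero, Matrix.one_apply]
    split_ifs
    · exact zero_le_one
    · exact le_rfl
  | succ n ih =>
    rw [pow_succ, Matrix.mul_apply]
    exact Finset.sum_nonneg fun ρ _ => mul_nonneg (ih ρ) (enrichedP_nonneg hx _ _)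

/-- if `x i > 0` for all `i = 0,…,k`, the enriched chain on
`S(H,K)`, `H = h+1`, `K = k+1`, is irreducible. -/
theorem enriched_irreducible (h k : ℕ) (hk : k ≤ h) (x : ℕ → ℝ)
    (hpos : ∀ i, i ≤ k → 0 < x i)
    (hsum : ∑ i ∈ Finset.range (k + 1), x i = 1)
    (σ τ : {σ // σ ∈ spFinset (h + 1) (k + 1)}) :
    ∃ n : ℕ, 0 < (enrichedM h k x ^ n) σ τ := by
  obtain ⟨f, hlt, hs, h0, hN⟩ :=
    exists_joining_word (mem_spFinset.1 σ.2) (mem_spFinset.1 τ.2)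
  have hmem : ∀ n ≤ h + 1 + (k + 1),
      windowPartition (h + 1) (k + 1) (fun j => f (n + j)) ∈ spFinset (h + 1) (k + 1) := by
    intro n hn
    refine mem_spFinset.2 (isSP_windowPartition (fun j hj => ?_) (hs n hn))
    rw [Finset.mem_Icc] at hj
    exact hlt _ (by omega) (by omega)
  have key : ∀ n (hn : n ≤ h + 1 + (k + 1)), 0 < (enrichedM h k x ^ n) σ ⟨_, hmem n hn⟩ := by
    intro n
    induction n with
    | zero =>
      intro hn
      have : (⟨_, hmem 0 hn⟩ : {σ // σ ∈ spFinset (h + 1) (k + 1)}) = σ := Subtype.ext h0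
      rw [this, pow_zero, Matrix.one_apply_eq]
      exact one_pos
    | succ n ih =>
      intro hn
      have hx : ∀ i, i ≤ k → 0 ≤ x i := fun i hi => (hpos i hi).le
      rw [pow_succ, Matrix.mul_apply]
      refine Finset.sum_pos' (fun ρ _ => mul_nonneg (enrichedM_pow_nonneg hx n σ ρ)
        (enrichedP_nonneg hx _ _)) ⟨⟨_, hmem n (by omega)⟩, Finset.mem_univ _, ?_⟩
      refine mul_pos (ih (by omega)) ?_
      have hstep := enrichedP_windowPartition_pos (h := h) (k := k) hpos
        (f := fun j => f (n + j)) (hlt _ (by omega) (by omega)) (hs n (by omega))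
        (fun c hc => by
          obtain ⟨j, hj, hjc⟩ := hs (n + 1) hn c hc
          exact ⟨j, hj, by rw [← hjc, Nat.add_assoc]⟩)
      simp only [← Nat.add_assoc n 1] at hstep
      exact hstep
  refine ⟨h + 1 + (k + 1), ?_⟩
  have := key _ le_rfl
  rwa [show (⟨_, hmem _ le_rfl⟩ : {σ // σ ∈ spFinset (h + 1) (k + 1)}) = τ from
    Subtype.ext hN] at this
end

section
/- The measure w̃ on S(H,K) defined by w̃(σ) = ∏_{(s,t) arch of σ} x_{K − C_σ(s,t)} is invariant for the enriched chain: for every τ ∈ S(H,K), ∑_{σ ∈ S(H,K)} w̃(σ) P̃_{σ,τ} = w̃(τ). -/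
/-- The number `C_σ(s,t)` of blocks of `σ` containing at least one element of
`{s, s+1, …, t}`. -/
def coverCount (σ : Finset (Finset ℕ)) (s t : ℕ) : ℕ :=
  (σ.filter fun b => ∃ u ∈ b, s ≤ u ∧ u ≤ t).card

/-- The set of arches of `σ` inside `{1,…,H}`: pairs `(s,t)` with `s < t` lying in a
common block with no element of that block strictly between them. -/
def arches (H : ℕ) (σ : Finset (Finset ℕ)) : Finset (ℕ × ℕ) :=
  ((Finset.Icc 1 H) ×ˢ (Finset.Icc 1 H)).filter
    (fun p => p.1 < p.2 ∧ ∃ b ∈ σ, p.1 ∈ b ∧ p.2 ∈ b ∧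
      ∀ u ∈ b, ¬(p.1 < u ∧ u < p.2))

/-- The enriched weight `w̃(σ) = ∏_{(s,t) arch of σ} x_{K − C_σ(s,t)}`. -/
noncomputable def archWeight (H K : ℕ) (x : ℕ → ℝ) (σ : Finset (Finset ℕ)) : ℝ :=
  ∏ p ∈ arches H σ, x (K - coverCount σ p.1 p.2)


/-! ### Set partitions, and removing or adding an extreme element -/

/-- `σ` is a partition of `{1,…,h}` into nonempty blocks, in elementwise form; the number of
blocks is left free. -/
structure IsPart (h : ℕ) (σ : Finset (Finset ℕ)) : Prop where
  ne : ∀ b ∈ σ, b ≠ ∅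
  eq_of_mem : ∀ b ∈ σ, ∀ c ∈ σ, ∀ n, n ∈ b → n ∈ c → b = c
  cover : ∀ n, (∃ b ∈ σ, n ∈ b) ↔ 1 ≤ n ∧ n ≤ h

lemma mem_spFinset_iff {H K : ℕ} {σ : Finset (Finset ℕ)} :
    σ ∈ spFinset H K ↔ IsPart H σ ∧ σ.card = K := by
  have hsup : ∀ n, n ∈ σ.sup id ↔ ∃ b ∈ σ, n ∈ b := by
    intro n; simp [Finset.mem_sup]
  rw [spFinset, Finset.mem_filter, IsSP]
  constructor
  · rintro ⟨-, h1, h2, h3, h4⟩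
    refine ⟨⟨fun b hb => (h1 b hb).ne_empty, fun b hb c hc n hnb hnc => ?_, fun n => ?_⟩, h4⟩
    · by_contra hne
      exact Finset.disjoint_left.mp (h2 b hb c hc hne) hnb hnc
    · rw [← hsup, h3, Finset.mem_Icc]
  · rintro ⟨hσ, h4⟩
    refine ⟨?_, fun b hb => Finset.nonempty_iff_ne_empty.mpr (hσ.ne b hb),
      fun b hb c hc hne => ?_, ?_, h4⟩
    · rw [Finset.mem_powerset]
      intro b hb
      rw [Finset.mem_powerset]
      intro n hn
      exact Finset.mem_Icc.mpr ((hσ.cover n).mp ⟨b, hb, hn⟩)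
    · exact Finset.disjoint_left.mpr fun n hb' hc' => hne (hσ.eq_of_mem b hb c hc n hb' hc')
    · ext n
      rw [hsup, hσ.cover, Finset.mem_Icc]

lemma IsPart.bound {h : ℕ} {σ : Finset (Finset ℕ)} (hσ : IsPart h σ) {b : Finset ℕ} (hb : b ∈ σ)
    {n : ℕ} (hn : n ∈ b) : 1 ≤ n ∧ n ≤ h :=
  (hσ.cover n).mp ⟨b, hb, hn⟩

/-- The effect of `downShift` on a single block: drop 1 and shift down by 1. -/
def lower (b : Finset ℕ) : Finset ℕ := (b.erase 1).image (· - 1)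

/-- Shift a block up by 1. -/
def raise (b : Finset ℕ) : Finset ℕ := b.image (· + 1)

/-- Shift `ρ` up by 1 and put the new element 1 into the block coming from `c`. For `c = ∅` the
element 1 becomes a new singleton block. -/
def addBottom (ρ : Finset (Finset ℕ)) (c : Finset ℕ) : Finset (Finset ℕ) :=
  insert (insert 1 (raise c)) ((ρ.erase c).image raise)

/-- Remove the element `H` from the partition `τ`, deleting its block if it becomes empty. -/
def trunc (H : ℕ) (τ : Finset (Finset ℕ)) : Finset (Finset ℕ) :=
  (τ.image fun b => b.erase H).erase ∅

/-- Put the new element `H` into the block `c` of `ρ`; for `c = ∅` it becomes a new singleton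
block. -/
def addTop (H : ℕ) (ρ : Finset (Finset ℕ)) (c : Finset ℕ) : Finset (Finset ℕ) :=
  insert (insert H c) (ρ.erase c)

/-- The minimum of a nonempty set; the empty set gets the junk value 0. -/
noncomputable def mn (b : Finset ℕ) : ℕ := sInf {n | n ∈ b}

lemma mn_mem {b : Finset ℕ} (hb : b ≠ ∅) : mn b ∈ b :=
  Nat.sInf_mem (s := {n | n ∈ b}) (Finset.nonempty_iff_ne_empty.mpr hb)

lemma mn_le {b : Finset ℕ} {n : ℕ} (hn : n ∈ b) : mn b ≤ n :=
  Nat.sInf_le (s := {n | n ∈ b}) hn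

lemma sup_mem {b : Finset ℕ} (hb : b ≠ ∅) : b.sup id ∈ b := by
  obtain ⟨n, hn, h⟩ := Finset.exists_mem_eq_sup b (Finset.nonempty_iff_ne_empty.mpr hb) id
  rw [h]; exact hn

lemma le_sup_id {b : Finset ℕ} {n : ℕ} (hn : n ∈ b) : n ≤ b.sup id :=
  Finset.le_sup (f := id) hn

lemma mem_downShift {σ : Finset (Finset ℕ)} {b : Finset ℕ} :
    b ∈ downShift σ ↔ b ≠ ∅ ∧ ∃ a ∈ σ, lower a = b := by
  simp [downShift, lower]

lemma mem_trunc {H : ℕ} {τ : Finset (Finset ℕ)} {b : Finset ℕ} :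
    b ∈ trunc H τ ↔ b ≠ ∅ ∧ ∃ a ∈ τ, a.erase H = b := by
  simp [trunc]

lemma mem_raise {b : Finset ℕ} {n : ℕ} : n ∈ raise b ↔ 1 ≤ n ∧ n - 1 ∈ b := by
  simp only [raise, Finset.mem_image]
  constructor
  · rintro ⟨m, hm, rfl⟩; simpa using hm
  · rintro ⟨h1, h2⟩; exact ⟨n - 1, h2, by omega⟩

lemma IsPart.mem_lower {h : ℕ} {σ : Finset (Finset ℕ)} (hσ : IsPart h σ) {b : Finset ℕ}
    (hb : b ∈ σ) {n : ℕ} : n ∈ lower b ↔ 1 ≤ n ∧ n + 1 ∈ b := by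
  simp only [lower, Finset.mem_image, Finset.mem_erase]
  constructor
  · rintro ⟨m, ⟨hm1, hm⟩, rfl⟩
    have := hσ.bound hb hm
    refine ⟨by omega, ?_⟩
    rwa [Nat.sub_add_cancel this.1]
  · rintro ⟨h1, h2⟩
    exact ⟨n + 1, ⟨by omega, h2⟩, by omega⟩

lemma raise_injective : Function.Injective raise := by
  intro a b hab
  ext n
  have := Finset.ext_iff.mp hab (n + 1)
  simpa [mem_raise] using this

lemma isPart_downShift {h : ℕ} {σ : Finset (Finset ℕ)} (hσ : IsPart (h + 1) σ) :
    IsPart h (downShift σ) := by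
  refine ⟨fun b hb => (mem_downShift.mp hb).1, ?_, ?_⟩
  · intro b hb c hc n hnb hnc
    obtain ⟨-, a, ha, rfl⟩ := mem_downShift.mp hb
    obtain ⟨-, a', ha', rfl⟩ := mem_downShift.mp hc
    rw [hσ.eq_of_mem a ha a' ha' (n + 1) ((hσ.mem_lower ha).mp hnb).2
      ((hσ.mem_lower ha').mp hnc).2]
  · intro n
    constructor
    · rintro ⟨b, hb, hn⟩
      obtain ⟨-, a, ha, rfl⟩ := mem_downShift.mp hb
      have h1 := (hσ.mem_lower ha).mp hn
      have := hσ.bound ha h1.2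
      omega
    · rintro ⟨h1, h2⟩
      obtain ⟨a, ha, hn⟩ := (hσ.cover (n + 1)).mpr ⟨by omega, by omega⟩
      have hm := (hσ.mem_lower ha).mpr ⟨h1, hn⟩
      exact ⟨lower a, mem_downShift.mpr ⟨Finset.ne_empty_of_mem hm, a, ha, rfl⟩, hm⟩

lemma isPart_trunc {h : ℕ} {τ : Finset (Finset ℕ)} (hτ : IsPart (h + 1) τ) :
    IsPart h (trunc (h + 1) τ) := by
  refine ⟨fun b hb => (mem_trunc.mp hb).1, ?_, ?_⟩
  · intro b hb c hc n hnb hnc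
    obtain ⟨-, a, ha, rfl⟩ := mem_trunc.mp hb
    obtain ⟨-, a', ha', rfl⟩ := mem_trunc.mp hc
    rw [hτ.eq_of_mem a ha a' ha' n (Finset.mem_of_mem_erase hnb) (Finset.mem_of_mem_erase hnc)]
  · intro n
    constructor
    · rintro ⟨b, hb, hn⟩
      obtain ⟨-, a, ha, rfl⟩ := mem_trunc.mp hb
      rw [Finset.mem_erase] at hn
      have := hτ.bound ha hn.2
      omega
    · rintro ⟨h1, h2⟩
      obtain ⟨a, ha, hn⟩ := (hτ.cover n).mpr ⟨by omega, by omega⟩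
      have hm : n ∈ a.erase (h + 1) := Finset.mem_erase.mpr ⟨by omega, hn⟩
      exact ⟨_, mem_trunc.mpr ⟨Finset.ne_empty_of_mem hm, a, ha, rfl⟩, hm⟩

lemma IsPart.raise_lower {h : ℕ} {σ : Finset (Finset ℕ)} (hσ : IsPart h σ) {b : Finset ℕ}
    (hb : b ∈ σ) : raise (lower b) = b.erase 1 := by
  ext n
  rw [mem_raise, hσ.mem_lower hb, Finset.mem_erase]
  constructor
  · rintro ⟨h1, h2, h3⟩
    rw [Nat.sub_add_cancel h1] at h3
    exact ⟨by omega, h3⟩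
  · rintro ⟨h1, h2⟩
    have := hσ.bound hb h2
    refine ⟨this.1, by omega, ?_⟩
    rwa [Nat.sub_add_cancel this.1]

/-- Every partition is recovered from `downShift σ` and what remains of the block of 1, so
`addBottom` parametrizes the fibres of `downShift`. -/
lemma IsPart.addBottom_downShift {h : ℕ} {σ : Finset (Finset ℕ)} (hσ : IsPart h σ)
    {B : Finset ℕ} (hB : B ∈ σ) (h1 : 1 ∈ B) : addBottom (downShift σ) (lower B) = σ := by
  have hrB : insert 1 (raise (lower B)) = B := by
    rw [hσ.raise_lower hB, Finset.insert_erase h1]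
  have hr : ∀ a ∈ σ, a ≠ B → raise (lower a) = a := by
    intro a ha hne
    rw [hσ.raise_lower ha, Finset.erase_eq_of_notMem]
    exact fun h1a => hne (hσ.eq_of_mem a ha B hB 1 h1a h1)
  ext a
  simp only [addBottom, hrB, Finset.mem_insert, Finset.mem_image, Finset.mem_erase,
    mem_downShift]
  constructor
  · rintro (rfl | ⟨b, ⟨hbB, -, a', ha', rfl⟩, rfl⟩)
    · exact hB
    · rw [hr a' ha' (fun h => hbB (by rw [h]))]; exact ha'
  · intro ha
    by_cases haB : a = B
    · exact Or.inl haB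
    · refine Or.inr ⟨lower a, ⟨fun hl => ?_, fun hl => ?_, a, ha, rfl⟩, hr a ha haB⟩
      · have h2 : a = B.erase 1 := by rw [← hr a ha haB, hl, hσ.raise_lower hB]
        obtain ⟨n, hn⟩ := Finset.nonempty_iff_ne_empty.mpr (hσ.ne a ha)
        have hn' := hn
        rw [h2] at hn'
        exact haB (hσ.eq_of_mem a ha B hB n hn (Finset.mem_of_mem_erase hn'))
      · have := hr a ha haB
        rw [hl] at this
        exact hσ.ne a ha (by rw [← this]; rfl)

lemma IsPart.addTop_trunc {H : ℕ} {τ : Finset (Finset ℕ)} (hτ : IsPart H τ)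
    {B : Finset ℕ} (hB : B ∈ τ) (h1 : H ∈ B) : addTop H (trunc H τ) (B.erase H) = τ := by
  have hr : ∀ a ∈ τ, a ≠ B → a.erase H = a := by
    intro a ha hne
    rw [Finset.erase_eq_of_notMem]
    exact fun h1a => hne (hτ.eq_of_mem a ha B hB H h1a h1)
  ext a
  simp only [addTop, Finset.insert_erase h1, Finset.mem_insert, Finset.mem_erase, mem_trunc]
  constructor
  · rintro (rfl | ⟨hbB, -, a', ha', rfl⟩)
    · exact hB
    · rw [hr a' ha' (fun h => hbB (by rw [h]))]; exact ha'
  · intro ha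
    by_cases haB : a = B
    · exact Or.inl haB
    · refine Or.inr ⟨fun hl => ?_, hτ.ne a ha, a, ha, hr a ha haB⟩
      obtain ⟨n, hn⟩ := Finset.nonempty_iff_ne_empty.mpr (hτ.ne a ha)
      have hn' := hn
      rw [hl] at hn'
      exact haB (hτ.eq_of_mem a ha B hB n hn (Finset.mem_of_mem_erase hn'))

lemma isPart_addBottom {h : ℕ} {ρ : Finset (Finset ℕ)} (hρ : IsPart h ρ) {c : Finset ℕ}
    (hc : c = ∅ ∨ c ∈ ρ) : IsPart (h + 1) (addBottom ρ c) := by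
  have hdis : ∀ b ∈ ρ, b ≠ c → ∀ n ∈ b, n ∉ c := by
    intro b hb hbc n hn hn'
    rcases hc with rfl | hc
    · simp at hn'
    · exact hbc (hρ.eq_of_mem b hb c hc n hn hn')
  have hbd : ∀ n ∈ c, 1 ≤ n ∧ n ≤ h := by
    intro n hn
    rcases hc with rfl | hc
    · simp at hn
    · exact hρ.bound hc hn
  refine ⟨?_, ?_, ?_⟩
  · intro b hb
    simp only [addBottom, Finset.mem_insert, Finset.mem_image, Finset.mem_erase] at hb
    rcases hb with rfl | ⟨a, ⟨-, ha⟩, rfl⟩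
    · simp
    · simpa [raise] using hρ.ne a ha
  · intro b hb d hd n hnb hnd
    simp only [addBottom, Finset.mem_insert, Finset.mem_image, Finset.mem_erase] at hb hd
    rcases hb with rfl | ⟨a, ⟨hac, ha⟩, rfl⟩ <;> rcases hd with rfl | ⟨a', ⟨hac', ha'⟩, rfl⟩
    · rfl
    · rw [Finset.mem_insert, mem_raise] at hnb
      rw [mem_raise] at hnd
      have := hρ.bound ha' hnd.2
      rcases hnb with rfl | hnb
      · omega
      · exact absurd hnb.2 (hdis a' ha' hac' _ hnd.2)
    · rw [Finset.mem_insert, mem_raise] at hnd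
      rw [mem_raise] at hnb
      have := hρ.bound ha hnb.2
      rcases hnd with rfl | hnd
      · omega
      · exact absurd hnd.2 (hdis a ha hac _ hnb.2)
    · rw [mem_raise] at hnb hnd
      rw [hρ.eq_of_mem a ha a' ha' _ hnb.2 hnd.2]
  · intro n
    simp only [addBottom, Finset.mem_insert, Finset.mem_image, Finset.mem_erase]
    constructor
    · rintro ⟨b, rfl | ⟨a, ⟨hac, ha⟩, rfl⟩, hn⟩
      · rw [Finset.mem_insert, mem_raise] at hn
        rcases hn with rfl | hn
        · omega
        · have := hbd _ hn.2
          omega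
      · rw [mem_raise] at hn
        have := hρ.bound ha hn.2
        omega
    · rintro ⟨h1, h2⟩
      by_cases hn : n = 1
      · exact ⟨_, Or.inl rfl, by simp [hn]⟩
      · obtain ⟨a, ha, hna⟩ := (hρ.cover (n - 1)).mpr ⟨by omega, by omega⟩
        by_cases hac : a = c
        · refine ⟨_, Or.inl rfl, ?_⟩
          rw [Finset.mem_insert, mem_raise, ← hac]
          exact Or.inr ⟨h1, hna⟩
        · exact ⟨_, Or.inr ⟨a, ⟨hac, ha⟩, rfl⟩, mem_raise.mpr ⟨h1, hna⟩⟩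

lemma lower_raise {b : Finset ℕ} (h0 : 0 ∉ b) : lower (raise b) = b := by
  ext n
  simp only [lower, raise, Finset.mem_image, Finset.mem_erase]
  grind

lemma lower_insert_raise {b : Finset ℕ} (h0 : 0 ∉ b) : lower (insert 1 (raise b)) = b := by
  conv_rhs => rw [← lower_raise h0]
  simp [lower]

lemma IsPart.zero_notMem {h : ℕ} {ρ : Finset (Finset ℕ)} (hρ : IsPart h ρ) {c : Finset ℕ}
    (hc : c = ∅ ∨ c ∈ ρ) : 0 ∉ c := by
  rcases hc with rfl | hc
  · simp
  · intro h0
    have := hρ.bound hc h0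
    omega

lemma downShift_addBottom {h : ℕ} {ρ : Finset (Finset ℕ)} (hρ : IsPart h ρ) {c : Finset ℕ}
    (hc : c = ∅ ∨ c ∈ ρ) : downShift (addBottom ρ c) = ρ := by
  ext b
  simp only [mem_downShift, addBottom, Finset.mem_insert, Finset.mem_image, Finset.mem_erase]
  constructor
  · rintro ⟨hb, a, rfl | ⟨a, ⟨hac, ha⟩, rfl⟩, rfl⟩
    · rw [lower_insert_raise (hρ.zero_notMem hc)] at hb ⊢
      exact hc.resolve_left hb
    · rwa [lower_raise (hρ.zero_notMem (Or.inr ha))]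
  · intro hb
    refine ⟨hρ.ne b hb, ?_⟩
    by_cases hbc : b = c
    · exact ⟨_, Or.inl rfl, by rw [lower_insert_raise (hρ.zero_notMem hc), hbc]⟩
    · exact ⟨_, Or.inr ⟨b, ⟨hbc, hb⟩, rfl⟩, lower_raise (hρ.zero_notMem (Or.inr hb))⟩

lemma one_notMem_raise {h : ℕ} {ρ : Finset (Finset ℕ)} (hρ : IsPart h ρ) {b : Finset ℕ}
    (hb : b ∈ ρ) : 1 ∉ raise b := by
  rw [mem_raise]
  exact fun h1 => hρ.zero_notMem (Or.inr hb) h1.2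

lemma card_addBottom {h : ℕ} {ρ : Finset (Finset ℕ)} (hρ : IsPart h ρ) (c : Finset ℕ) :
    (addBottom ρ c).card = (ρ.erase c).card + 1 := by
  rw [addBottom, Finset.card_insert_of_notMem, Finset.card_image_of_injective _ raise_injective]
  intro hmem
  obtain ⟨a, ha, hab⟩ := Finset.mem_image.mp hmem
  exact one_notMem_raise hρ (Finset.mem_of_mem_erase ha) (by rw [hab]; simp)

lemma singleton_mem_addBottom {h : ℕ} {ρ : Finset (Finset ℕ)} (hρ : IsPart h ρ) {c : Finset ℕ} :
    {1} ∈ addBottom ρ c → 0 ∉ c → c = ∅ := by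
  intro hmem h0
  rw [addBottom, Finset.mem_insert, Finset.mem_image] at hmem
  rcases hmem with h1 | ⟨a, ha, h1⟩
  · rw [← lower_insert_raise h0, ← h1]; rfl
  · exact absurd (by rw [h1]; simp) (one_notMem_raise hρ (Finset.mem_of_mem_erase ha))

lemma addBottom_inj {h : ℕ} {ρ : Finset (Finset ℕ)} (hρ : IsPart h ρ) {c d : Finset ℕ}
    (hc : c ∈ ρ) (hd : d ∈ ρ) (hcd : addBottom ρ c = addBottom ρ d) : c = d := by
  have hp := isPart_addBottom hρ (Or.inr hd)
  have h1 : insert 1 (raise c) ∈ addBottom ρ d := by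
    rw [← hcd]; exact Finset.mem_insert_self _ _
  have := hp.eq_of_mem _ h1 _ (Finset.mem_insert_self _ _) 1 (by simp) (by simp)
  rw [← lower_insert_raise (hρ.zero_notMem (Or.inr hc)), this,
    lower_insert_raise (hρ.zero_notMem (Or.inr hd))]

lemma trunc_addTop {h : ℕ} {ρ : Finset (Finset ℕ)} (hρ : IsPart h ρ) {c : Finset ℕ}
    (hc : c = ∅ ∨ c ∈ ρ) : trunc (h + 1) (addTop (h + 1) ρ c) = ρ := by
  have hH : ∀ b, b = ∅ ∨ b ∈ ρ → h + 1 ∉ b := by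
    rintro b (rfl | hb)
    · simp
    · intro hh
      have := hρ.bound hb hh
      omega
  ext b
  simp only [mem_trunc, addTop, Finset.mem_insert, Finset.mem_erase]
  constructor
  · rintro ⟨hb, a, rfl | ⟨hac, ha⟩, rfl⟩
    · rw [Finset.erase_insert (hH c hc)] at hb ⊢
      exact hc.resolve_left hb
    · rwa [Finset.erase_eq_of_notMem (hH a (Or.inr ha))]
  · intro hb
    refine ⟨hρ.ne b hb, ?_⟩
    by_cases hbc : b = c
    · exact ⟨_, Or.inl rfl, by rw [Finset.erase_insert (hH c hc), hbc]⟩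
    · exact ⟨b, Or.inr ⟨hbc, hb⟩, Finset.erase_eq_of_notMem (hH b (Or.inr hb))⟩

/-! ### How the weight changes when an extreme element is removed -/

/-- `lower` is injective on the blocks meeting `{s+1,…,t+1}`, since such blocks stay nonempty. -/
lemma coverCount_downShift {h : ℕ} {σ : Finset (Finset ℕ)} (hσ : IsPart (h + 1) σ) {s t : ℕ}
    (hs : 1 ≤ s) : coverCount (downShift σ) s t = coverCount σ (s + 1) (t + 1) := by
  have himg : (downShift σ).filter (fun b => ∃ u ∈ b, s ≤ u ∧ u ≤ t) =
      (σ.filter fun b => ∃ u ∈ b, s + 1 ≤ u ∧ u ≤ t + 1).image lower := by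
    ext b
    simp only [Finset.mem_filter, Finset.mem_image, mem_downShift]
    constructor
    · rintro ⟨⟨-, a, ha, rfl⟩, u, hu, h1, h2⟩
      exact ⟨a, ⟨ha, u + 1, ((hσ.mem_lower ha).mp hu).2, by omega, by omega⟩, rfl⟩
    · rintro ⟨a, ⟨ha, u, hu, h1, h2⟩, rfl⟩
      have hm : u - 1 ∈ lower a := by
        rw [hσ.mem_lower ha, Nat.sub_add_cancel (by omega)]
        exact ⟨by omega, hu⟩
      exact ⟨⟨Finset.ne_empty_of_mem hm, a, ha, rfl⟩, u - 1, hm, by omega, by omega⟩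
  rw [coverCount, coverCount, himg, Finset.card_image_of_injOn]
  intro a ha b hb hab
  simp only [Finset.coe_filter, Set.mem_ofPred_eq] at ha hb
  obtain ⟨ha, u, hu, h1, h2⟩ := ha
  have hm : u - 1 ∈ lower a := by
    rw [hσ.mem_lower ha, Nat.sub_add_cancel (by omega)]
    exact ⟨by omega, hu⟩
  have hm' := hm
  have hab' : lower a = lower b := hab
  rw [hab'] at hm'
  exact hσ.eq_of_mem a ha b hb.1 _ ((hσ.mem_lower ha).mp hm).2 ((hσ.mem_lower hb.1).mp hm').2

lemma coverCount_trunc {H : ℕ} {τ : Finset (Finset ℕ)} (hτ : IsPart H τ) {s t : ℕ}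
    (ht : t < H) : coverCount (trunc H τ) s t = coverCount τ s t := by
  have himg : (trunc H τ).filter (fun b => ∃ u ∈ b, s ≤ u ∧ u ≤ t) =
      (τ.filter fun b => ∃ u ∈ b, s ≤ u ∧ u ≤ t).image (fun b => b.erase H) := by
    ext b
    simp only [Finset.mem_filter, Finset.mem_image, mem_trunc]
    constructor
    · rintro ⟨⟨-, a, ha, rfl⟩, u, hu, h1, h2⟩
      exact ⟨a, ⟨ha, u, Finset.mem_of_mem_erase hu, h1, h2⟩, rfl⟩
    · rintro ⟨a, ⟨ha, u, hu, h1, h2⟩, rfl⟩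
      have hm : u ∈ a.erase H := Finset.mem_erase.mpr ⟨by omega, hu⟩
      exact ⟨⟨Finset.ne_empty_of_mem hm, a, ha, rfl⟩, u, hm, h1, h2⟩
  rw [coverCount, coverCount, himg, Finset.card_image_of_injOn]
  intro a ha b hb hab
  simp only [Finset.coe_filter, Set.mem_ofPred_eq] at ha hb
  obtain ⟨ha, u, hu, h1, h2⟩ := ha
  have hm : u ∈ a.erase H := Finset.mem_erase.mpr ⟨by omega, hu⟩
  simp only at hab
  rw [hab] at hm
  exact hτ.eq_of_mem a ha b hb.1 u hu (Finset.mem_of_mem_erase hm)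

lemma IsPart.mem_arches {H : ℕ} {σ : Finset (Finset ℕ)} (hσ : IsPart H σ) {s t : ℕ} :
    (s, t) ∈ arches H σ ↔ s < t ∧ ∃ b ∈ σ, s ∈ b ∧ t ∈ b ∧ ∀ u ∈ b, ¬(s < u ∧ u < t) := by
  simp only [arches, Finset.mem_filter, Finset.mem_product, Finset.mem_Icc]
  constructor
  · rintro ⟨-, h⟩; exact h
  · rintro ⟨h1, b, hb, hs, ht, h⟩
    exact ⟨⟨hσ.bound hb hs, hσ.bound hb ht⟩, h1, b, hb, hs, ht, h⟩

lemma arches_filter_bottom {h : ℕ} {σ : Finset (Finset ℕ)} (hσ : IsPart (h + 1) σ) :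
    (arches (h + 1) σ).filter (fun p => ¬ p.1 = 1) =
      (arches h (downShift σ)).image (fun p => (p.1 + 1, p.2 + 1)) := by
  have hd := isPart_downShift hσ
  ext ⟨s, t⟩
  simp only [Finset.mem_filter, hσ.mem_arches, Finset.mem_image, Prod.exists, hd.mem_arches,
    Prod.mk.injEq]
  constructor
  · rintro ⟨⟨hst, b, hb, hs, ht, hu⟩, h1⟩
    have hs0 := hσ.bound hb hs
    have hm : ∀ u, 2 ≤ u → u ∈ b → u - 1 ∈ lower b := by
      intro u hu2 hub
      rw [hσ.mem_lower hb, Nat.sub_add_cancel (by omega)]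
      exact ⟨by omega, hub⟩
    have hms := hm s (by omega) hs
    refine ⟨s - 1, t - 1, ⟨by omega, lower b, mem_downShift.mpr ⟨Finset.ne_empty_of_mem hms,
      b, hb, rfl⟩, hms, hm t (by omega) ht, ?_⟩, by omega, by omega⟩
    intro u hul hc
    exact hu (u + 1) ((hσ.mem_lower hb).mp hul).2 (by omega)
  · rintro ⟨s', t', ⟨hst, b, hb, hs, ht, hu⟩, rfl, rfl⟩
    obtain ⟨-, a, ha, rfl⟩ := mem_downShift.mp hb
    have hs' := (hσ.mem_lower ha).mp hs
    refine ⟨⟨by omega, a, ha, hs'.2, ((hσ.mem_lower ha).mp ht).2, ?_⟩, by omega⟩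
    intro u hua hc
    refine hu (u - 1) ?_ (by omega)
    rw [hσ.mem_lower ha, Nat.sub_add_cancel (by omega)]
    exact ⟨by omega, hua⟩

lemma arches_filter_top {h : ℕ} {τ : Finset (Finset ℕ)} (hτ : IsPart (h + 1) τ) :
    (arches (h + 1) τ).filter (fun p => ¬ p.2 = h + 1) = arches h (trunc (h + 1) τ) := by
  have hd := isPart_trunc hτ
  ext ⟨s, t⟩
  simp only [Finset.mem_filter, hτ.mem_arches, hd.mem_arches]
  constructor
  · rintro ⟨⟨hst, b, hb, hs, ht, hu⟩, h1⟩
    have ht0 := hτ.bound hb ht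
    have hm : s ∈ b.erase (h + 1) := Finset.mem_erase.mpr ⟨by omega, hs⟩
    exact ⟨hst, _, mem_trunc.mpr ⟨Finset.ne_empty_of_mem hm, b, hb, rfl⟩, hm,
      Finset.mem_erase.mpr ⟨h1, ht⟩, fun u hu' => hu u (Finset.mem_of_mem_erase hu')⟩
  · rintro ⟨hst, b, hb, hs, ht, hu⟩
    obtain ⟨-, a, ha, rfl⟩ := mem_trunc.mp hb
    rw [Finset.mem_erase] at hs ht
    have ht0 := hτ.bound ha ht.2
    exact ⟨⟨hst, a, ha, hs.2, ht.2, fun u hua hc =>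
      hu u (Finset.mem_erase.mpr ⟨by omega, hua⟩) hc⟩, ht.1⟩

/-- The weight of `σ` is that of `downShift σ` times the contribution of the arches starting at 1. -/
lemma archWeight_bottom {h : ℕ} (K : ℕ) (x : ℕ → ℝ) {σ : Finset (Finset ℕ)}
    (hσ : IsPart (h + 1) σ) :
    archWeight (h + 1) K x σ =
      (∏ p ∈ (arches (h + 1) σ).filter (fun p => p.1 = 1), x (K - coverCount σ p.1 p.2)) *
        archWeight h K x (downShift σ) := by
  rw [archWeight, archWeight, ← Finset.prod_filter_mul_prod_filter_not _ (fun p => p.1 = 1),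
    arches_filter_bottom hσ, Finset.prod_image]
  · congr 1
    refine Finset.prod_congr rfl fun p hp => ?_
    rw [coverCount_downShift hσ]
    simp only [arches, Finset.mem_filter, Finset.mem_product, Finset.mem_Icc] at hp
    exact hp.1.1.1
  · rintro ⟨a, b⟩ - ⟨c, d⟩ - hab
    simpa using hab

/-- The weight of `τ` is that of `trunc τ` times the contribution of the arches ending at the
largest element. -/
lemma archWeight_top {h : ℕ} (K : ℕ) (x : ℕ → ℝ) {τ : Finset (Finset ℕ)}
    (hτ : IsPart (h + 1) τ) :
    archWeight (h + 1) K x τ =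
      (∏ p ∈ (arches (h + 1) τ).filter (fun p => p.2 = h + 1), x (K - coverCount τ p.1 p.2)) *
        archWeight h K x (trunc (h + 1) τ) := by
  rw [archWeight, archWeight, ← Finset.prod_filter_mul_prod_filter_not _ (fun p => p.2 = h + 1),
    arches_filter_top hτ]
  congr 1
  refine Finset.prod_congr rfl fun p hp => ?_
  rw [coverCount_trunc hτ]
  simp only [arches, Finset.mem_filter, Finset.mem_product, Finset.mem_Icc] at hp
  omega

lemma arches_bottom_eq_empty {h : ℕ} {σ : Finset (Finset ℕ)} (hσ : IsPart (h + 1) σ)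
    (h1 : {1} ∈ σ) : (arches (h + 1) σ).filter (fun p => p.1 = 1) = ∅ := by
  rw [Finset.filter_eq_empty_iff]
  rintro ⟨s, t⟩ hp rfl
  obtain ⟨hst, b, hb, hs, ht, -⟩ := hσ.mem_arches.mp hp
  rw [hσ.eq_of_mem b hb _ h1 1 hs (by simp), Finset.mem_singleton] at ht
  omega

lemma arches_top_eq_empty {h : ℕ} {τ : Finset (Finset ℕ)} (hτ : IsPart (h + 1) τ)
    (h1 : {h + 1} ∈ τ) : (arches (h + 1) τ).filter (fun p => p.2 = h + 1) = ∅ := by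
  rw [Finset.filter_eq_empty_iff]
  rintro ⟨s, t⟩ hp ht'
  simp only at ht'
  subst ht'
  obtain ⟨hst, b, hb, hs, ht, -⟩ := hτ.mem_arches.mp hp
  rw [hτ.eq_of_mem b hb _ h1 _ ht (by simp), Finset.mem_singleton] at hs
  omega

/-- If the block of 1 is not a singleton, then 1 starts exactly one arch. It meets every block of
`downShift σ` except those whose minimum exceeds that of `lower B`. -/
lemma prod_arches_bottom {h K : ℕ} (x : ℕ → ℝ) {σ : Finset (Finset ℕ)}
    (hσ : IsPart (h + 1) σ) {B : Finset ℕ} (hB : B ∈ σ) (h1 : 1 ∈ B) (hne : lower B ≠ ∅)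
    (hK : (downShift σ).card = K) :
    ∏ p ∈ (arches (h + 1) σ).filter (fun p => p.1 = 1), x (K - coverCount σ p.1 p.2) =
      x ((downShift σ).filter fun b => mn (lower B) < mn b).card := by
  have hd := isPart_downShift hσ
  have hmB := (hσ.mem_lower hB).mp (mn_mem hne)
  have hsing : (arches (h + 1) σ).filter (fun p => p.1 = 1) = {(1, mn (lower B) + 1)} := by
    ext ⟨s, t⟩
    simp only [Finset.mem_filter, hσ.mem_arches, Finset.mem_singleton, Prod.mk.injEq]
    constructor
    · rintro ⟨⟨hst, b, hb, hs, ht, hu⟩, rfl⟩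
      obtain rfl := hσ.eq_of_mem b hb B hB 1 hs h1
      have hle : mn (lower b) ≤ t - 1 := by
        refine mn_le ?_
        rw [hσ.mem_lower hb, Nat.sub_add_cancel (by omega)]
        exact ⟨by omega, ht⟩
      have := hu _ hmB.2
      omega
    · rintro ⟨rfl, rfl⟩
      refine ⟨⟨by omega, B, hB, h1, hmB.2, fun u hu hc => ?_⟩, rfl⟩
      have hle : mn (lower B) ≤ u - 1 := by
        refine mn_le ?_
        rw [hσ.mem_lower hB, Nat.sub_add_cancel (by omega)]
        exact ⟨by omega, hu⟩
      omega
  -- A block containing 1 and meeting the arch is `B` itself, which also contains the right end.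
  have hcov : coverCount σ 1 (mn (lower B) + 1) = coverCount σ (1 + 1) (mn (lower B) + 1) := by
    unfold coverCount
    congr 1
    refine Finset.filter_congr fun b hb => ⟨?_, ?_⟩
    · rintro ⟨u, hu, h2, h3⟩
      by_cases hu1 : u = 1
      · subst hu1
        obtain rfl := hσ.eq_of_mem b hb B hB 1 hu h1
        exact ⟨_, hmB.2, by omega, le_rfl⟩
      · exact ⟨u, hu, by omega, h3⟩
    · rintro ⟨u, hu, h2, h3⟩
      exact ⟨u, hu, by omega, h3⟩
  have hcov2 : coverCount (downShift σ) 1 (mn (lower B)) =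
      ((downShift σ).filter fun b => ¬ mn (lower B) < mn b).card := by
    unfold coverCount
    congr 1
    refine Finset.filter_congr fun b hb => ⟨?_, fun hm => ?_⟩
    · rintro ⟨u, hu, -, h3⟩
      have := mn_le hu
      omega
    · have hmb := mn_mem (hd.ne b hb)
      exact ⟨_, hmb, (hd.bound hb hmb).1, by omega⟩
  rw [hsing, Finset.prod_singleton]
  simp only
  rw [hcov, ← coverCount_downShift hσ le_rfl, hcov2, ← hK,
    ← Finset.card_filter_add_card_filter_not (s := downShift σ) (fun b => mn (lower B) < mn b),
    Nat.add_sub_cancel]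

/-- The index, starting from 0, of the block `c` of `ρ` when blocks are ordered by their maxima. -/
def blockRank (ρ : Finset (Finset ℕ)) (c : Finset ℕ) : ℕ :=
  (ρ.filter fun b => b.sup id < c.sup id).card

/-- If the block of the largest element is not a singleton, then exactly one arch ends there. It
meets every block of the truncated partition except those of smaller maximum. -/
lemma prod_arches_top {h K : ℕ} (x : ℕ → ℝ) {τ : Finset (Finset ℕ)}
    (hτ : IsPart (h + 1) τ) {B : Finset ℕ} (hB : B ∈ τ) (h1 : h + 1 ∈ B)
    (hne : B.erase (h + 1) ≠ ∅) (hK : (trunc (h + 1) τ).card = K) :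
    ∏ p ∈ (arches (h + 1) τ).filter (fun p => p.2 = h + 1), x (K - coverCount τ p.1 p.2) =
      x (blockRank (trunc (h + 1) τ) (B.erase (h + 1))) := by
  have hd := isPart_trunc hτ
  have hmB := Finset.mem_erase.mp (sup_mem hne)
  have hmh := hτ.bound hB hmB.2
  have hlt : (B.erase (h + 1)).sup id < h + 1 := lt_of_le_of_ne hmh.2 hmB.1
  have hsing : (arches (h + 1) τ).filter (fun p => p.2 = h + 1) =
      {((B.erase (h + 1)).sup id, h + 1)} := by
    ext ⟨s, t⟩
    simp only [Finset.mem_filter, hτ.mem_arches, Finset.mem_singleton, Prod.mk.injEq]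
    constructor
    · rintro ⟨⟨hst, b, hb, hs, ht, hu⟩, rfl⟩
      obtain rfl := hτ.eq_of_mem b hb B hB _ ht h1
      have hle : s ≤ (b.erase (h + 1)).sup id :=
        le_sup_id (Finset.mem_erase.mpr ⟨by omega, hs⟩)
      have := hu _ hmB.2
      exact ⟨by omega, rfl⟩
    · rintro ⟨rfl, rfl⟩
      refine ⟨⟨hlt, B, hB, hmB.2, h1, fun u hu hc => ?_⟩, rfl⟩
      have hle : u ≤ (B.erase (h + 1)).sup id :=
        le_sup_id (Finset.mem_erase.mpr ⟨by omega, hu⟩)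
      omega
  -- A block containing `h + 1` is `B` itself, which also contains the left end.
  have hcov : coverCount τ ((B.erase (h + 1)).sup id) (h + 1) =
      coverCount τ ((B.erase (h + 1)).sup id) h := by
    unfold coverCount
    congr 1
    refine Finset.filter_congr fun b hb => ⟨?_, ?_⟩
    · rintro ⟨u, hu, h2, h3⟩
      by_cases hu1 : u = h + 1
      · subst hu1
        obtain rfl := hτ.eq_of_mem b hb B hB _ hu h1
        exact ⟨_, hmB.2, le_rfl, by omega⟩
      · exact ⟨u, hu, h2, by omega⟩
    · rintro ⟨u, hu, h2, h3⟩
      exact ⟨u, hu, h2, by omega⟩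
  have hcov2 : coverCount (trunc (h + 1) τ) ((B.erase (h + 1)).sup id) h =
      ((trunc (h + 1) τ).filter fun b => ¬ b.sup id < (B.erase (h + 1)).sup id).card := by
    unfold coverCount
    congr 1
    refine Finset.filter_congr fun b hb => ⟨?_, fun hm => ?_⟩
    · rintro ⟨u, hu, h2, -⟩
      have := le_sup_id hu
      omega
    · have hmb := sup_mem (hd.ne b hb)
      exact ⟨_, hmb, by omega, (hd.bound hb hmb).2⟩
  rw [hsing, Finset.prod_singleton]
  simp only
  rw [hcov, ← coverCount_trunc hτ (Nat.lt_succ_self h), hcov2, ← hK, blockRank,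
    ← Finset.card_filter_add_card_filter_not (s := trunc (h + 1) τ)
      (fun b => b.sup id < (B.erase (h + 1)).sup id),
    Nat.add_sub_cancel]

lemma card_lt_injOn {α β : Type*} [LinearOrder β] (s : Finset α) (f : α → β)
    (hf : Set.InjOn f s) : Set.InjOn (fun c => (s.filter fun b => f b < f c).card) s := by
  have key : ∀ c ∈ s, ∀ d ∈ s, f c < f d →
      (s.filter fun b => f b < f c).card < (s.filter fun b => f b < f d).card := by
    intro c hc d hd hcd
    refine Finset.card_lt_card (Finset.ssubset_iff_of_subset ?_ |>.mpr ⟨c, ?_, ?_⟩)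
    · intro b hb
      rw [Finset.mem_filter] at hb ⊢
      exact ⟨hb.1, hb.2.trans hcd⟩
    · exact Finset.mem_filter.mpr ⟨hc, hcd⟩
    · simp
  intro c hc d hd hcd
  rcases lt_trichotomy (f c) (f d) with hlt | heq | hlt
  · exact absurd hcd (key c hc d hd hlt).ne
  · exact hf hc hd heq
  · exact absurd hcd (key d hd c hc hlt).ne.symm

/-- The ranks of the elements of `s` with respect to an injective key are `0,…,#s - 1`. -/
lemma image_card_lt {α β : Type*} [LinearOrder β] (s : Finset α) (f : α → β)
    (hf : Set.InjOn f s) :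
    s.image (fun c => (s.filter fun b => f b < f c).card) = Finset.range s.card := by
  refine Finset.eq_of_subset_of_card_le ?_ ?_
  · intro i hi
    obtain ⟨c, hc, rfl⟩ := Finset.mem_image.mp hi
    refine Finset.mem_range.mpr (Finset.card_lt_card (Finset.filter_ssubset.mpr ⟨c, hc, ?_⟩))
    simp
  · rw [Finset.card_range, Finset.card_image_of_injOn (card_lt_injOn s f hf)]

/-- As `c` runs through the blocks, the number of blocks with larger minimum takes each value
`0,…,#ρ - 1` once. -/
lemma sum_card_mn_lt {h : ℕ} {ρ : Finset (Finset ℕ)} (hρ : IsPart h ρ) (x : ℕ → ℝ) :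
    ∑ c ∈ ρ, x (ρ.filter fun b => mn c < mn b).card = ∑ i ∈ Finset.range ρ.card, x i := by
  -- The order on minima is reversed, as the rank here counts larger minima.
  have hinj : Set.InjOn (fun b => OrderDual.toDual (mn b)) (ρ : Set (Finset ℕ)) := by
    intro b hb c hc hbc
    have hbc' : mn b = mn c := hbc
    exact hρ.eq_of_mem b hb c hc (mn b) (mn_mem (hρ.ne b hb)) (hbc' ▸ mn_mem (hρ.ne c hc))
  rw [← image_card_lt ρ _ hinj, Finset.sum_image (card_lt_injOn ρ _ hinj)]
  rfl

lemma IsPart.sup_injOn {h : ℕ} {ρ : Finset (Finset ℕ)} (hρ : IsPart h ρ) :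
    Set.InjOn (fun b : Finset ℕ => b.sup id) (ρ : Set (Finset ℕ)) := by
  intro b hb c hc hbc
  have hbc' : b.sup id = c.sup id := hbc
  exact hρ.eq_of_mem b hb c hc _ (sup_mem (hρ.ne b hb)) (hbc' ▸ sup_mem (hρ.ne c hc))

lemma insertIntoBlock_blockRank {h : ℕ} {ρ : Finset (Finset ℕ)} (hρ : IsPart h ρ)
    {c : Finset ℕ} (hc : c ∈ ρ) (v : ℕ) :
    insertIntoBlock v (blockRank ρ c) ρ = addTop v ρ c := by
  have hif : ∀ b ∈ ρ, (if (ρ.filter fun d => d.sup id < b.sup id).card = blockRank ρ c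
      then insert v b else b) = if b = c then insert v b else b := by
    intro b hb
    refine if_congr ⟨fun hr => card_lt_injOn ρ _ hρ.sup_injOn hb hc hr, ?_⟩ rfl rfl
    rintro rfl
    rfl
  rw [insertIntoBlock, Finset.image_congr hif]
  ext a
  simp only [addTop, Finset.mem_image, Finset.mem_insert, Finset.mem_erase]
  constructor
  · rintro ⟨b, hb, rfl⟩
    split_ifs with hbc
    · exact Or.inl (by rw [hbc])
    · exact Or.inr ⟨hbc, hb⟩
  · rintro (rfl | ⟨hac, ha⟩)
    · exact ⟨c, hc, if_pos rfl⟩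
    · exact ⟨a, ha, if_neg hac⟩

lemma exists_blockRank {h : ℕ} {ρ : Finset (Finset ℕ)} (hρ : IsPart h ρ) {i : ℕ}
    (hi : i < ρ.card) : ∃ c ∈ ρ, blockRank ρ c = i := by
  have := Finset.mem_range.mpr hi
  rw [← image_card_lt ρ _ hρ.sup_injOn] at this
  exact Finset.mem_image.mp this

lemma blockRank_lt {ρ : Finset (Finset ℕ)} {c : Finset ℕ} (hc : c ∈ ρ) :
    blockRank ρ c < ρ.card :=
  Finset.card_lt_card (Finset.filter_ssubset.mpr ⟨c, hc, lt_irrefl _⟩)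

/-! ### Evaluating the sum over predecessors -/

lemma singleton_notMem_addTop {h : ℕ} {ρ : Finset (Finset ℕ)} (hρ : IsPart h ρ) {c : Finset ℕ}
    (hc : c ∈ ρ) : {h + 1} ∉ addTop (h + 1) ρ c := by
  intro hmem
  rw [addTop, Finset.mem_insert, Finset.mem_erase] at hmem
  rcases hmem with heq | ⟨-, hmem⟩
  · have hm := mn_mem (hρ.ne c hc)
    have := hρ.bound hc hm
    have h2 : mn c ∈ ({h + 1} : Finset ℕ) := heq ▸ Finset.mem_insert_of_mem hm
    rw [Finset.mem_singleton] at h2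
    omega
  · have := hρ.bound hmem (Finset.mem_singleton_self _)
    omega

lemma card_addTop {h : ℕ} {ρ : Finset (Finset ℕ)} (hρ : IsPart h ρ) (c : Finset ℕ) :
    (addTop (h + 1) ρ c).card = (ρ.erase c).card + 1 := by
  rw [addTop, Finset.card_insert_of_notMem]
  intro hmem
  have := hρ.bound (Finset.mem_of_mem_erase hmem) (Finset.mem_insert_self _ _)
  omega

lemma addTop_empty {h : ℕ} {ρ : Finset (Finset ℕ)} (hρ : IsPart h ρ) (v : ℕ) :
    addTop v ρ ∅ = insert {v} ρ := by
  rw [addTop, Finset.erase_eq_of_notMem fun h0 => hρ.ne _ h0 rfl]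
  rfl

lemma IsPart.exists_eq_addBottom {h : ℕ} {σ : Finset (Finset ℕ)} (hσ : IsPart (h + 1) σ)
    (h1 : {1} ∉ σ) : ∃ c ∈ downShift σ, addBottom (downShift σ) c = σ := by
  obtain ⟨B, hB, h1B⟩ := (hσ.cover 1).mpr ⟨le_rfl, by omega⟩
  refine ⟨lower B, mem_downShift.mpr ⟨fun h0 => h1 ?_, B, hB, rfl⟩,
    hσ.addBottom_downShift hB h1B⟩
  have hr := hσ.raise_lower hB
  rw [h0] at hr
  have : B = {1} := by
    rw [← Finset.insert_erase h1B, ← hr]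
    rfl
  rwa [← this]

lemma archWeight_addBottom {h : ℕ} (x : ℕ → ℝ) {ρ : Finset (Finset ℕ)} (hρ : IsPart h ρ)
    {c : Finset ℕ} (hc : c ∈ ρ) :
    archWeight (h + 1) ρ.card x (addBottom ρ c) =
      x (ρ.filter fun b => mn c < mn b).card * archWeight h ρ.card x ρ := by
  have hσ := isPart_addBottom hρ (Or.inr hc)
  have hds := downShift_addBottom hρ (Or.inr hc)
  have hl := lower_insert_raise (hρ.zero_notMem (Or.inr hc))
  rw [archWeight_bottom _ x hσ, prod_arches_bottom x hσ (Finset.mem_insert_self _ _)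
    (Finset.mem_insert_self _ _) (by rw [hl]; exact hρ.ne c hc) (by rw [hds]), hds, hl]

lemma archWeight_addTop {h : ℕ} (x : ℕ → ℝ) {ρ : Finset (Finset ℕ)} (hρ : IsPart h ρ)
    {c : Finset ℕ} (hc : c ∈ ρ) (hτ : IsPart (h + 1) (addTop (h + 1) ρ c)) :
    archWeight (h + 1) ρ.card x (addTop (h + 1) ρ c) =
      x (blockRank ρ c) * archWeight h ρ.card x ρ := by
  have htr := trunc_addTop hρ (Or.inr hc)
  have hl : (insert (h + 1) c).erase (h + 1) = c := by
    rw [Finset.erase_insert]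
    intro hh
    have := hρ.bound hc hh
    omega
  rw [archWeight_top _ x hτ, prod_arches_top x hτ (Finset.mem_insert_self _ _)
    (Finset.mem_insert_self _ _) (by rw [hl]; exact hρ.ne c hc) (by rw [htr]), htr, hl]

/-- When the largest element is a singleton block of `τ`, the only predecessor is
`addBottom ρ ∅` with `ρ = trunc τ`; it has the same weight as `τ` and moves to `τ` surely. -/
lemma invariant_of_singleton_mem {h k : ℕ} (x : ℕ → ℝ) {τ : Finset (Finset ℕ)}
    (hτ : τ ∈ spFinset (h + 1) (k + 1)) (hH : {h + 1} ∈ τ) :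
    ∑ σ ∈ spFinset (h + 1) (k + 1), archWeight (h + 1) (k + 1) x σ * enrichedP h k x σ τ
      = archWeight (h + 1) (k + 1) x τ := by
  obtain ⟨hτp, hτK⟩ := mem_spFinset_iff.mp hτ
  obtain ⟨ρ, hρdef⟩ : ∃ ρ, ρ = trunc (h + 1) τ := ⟨_, rfl⟩
  have hρ : IsPart h ρ := hρdef ▸ isPart_trunc hτp
  have hτρ : addTop (h + 1) ρ ∅ = τ := by
    have := hτp.addTop_trunc hH (Finset.mem_singleton_self _)
    rwa [Finset.erase_singleton, ← hρdef] at this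
  have h1 : {1} ∈ addBottom ρ ∅ := Finset.mem_insert_self _ _
  have hds : downShift (addBottom ρ ∅) = ρ := downShift_addBottom hρ (Or.inl rfl)
  have hσp : IsPart (h + 1) (addBottom ρ ∅) := isPart_addBottom hρ (Or.inl rfl)
  rw [Finset.sum_eq_single (addBottom ρ ∅)]
  · rw [archWeight_bottom _ _ hσp, archWeight_top _ _ hτp, arches_bottom_eq_empty hσp h1,
      arches_top_eq_empty hτp hH, hds, ← hρdef, enrichedP, if_pos h1, hds,
      if_pos (by rw [← hτρ, addTop_empty hρ]), mul_one, Finset.prod_empty, Finset.prod_empty]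
  · intro σ hσ hne
    obtain ⟨hσ', hσK⟩ := mem_spFinset_iff.mp hσ
    have hd := isPart_downShift hσ'
    rw [enrichedP]
    split_ifs with h1σ heq
    · refine absurd ?_ hne
      rw [← addTop_empty hd] at heq
      have hρσ : ρ = downShift σ := by rw [hρdef, heq, trunc_addTop hd (Or.inl rfl)]
      rw [hρσ]
      exact (hσ'.addBottom_downShift h1σ (Finset.mem_singleton_self _)).symm
    · rw [mul_zero]
    · rw [Finset.sum_eq_zero, mul_zero]
      intro i hi
      refine if_neg fun heq => ?_
      obtain ⟨c, hc, hcσ⟩ := hσ'.exists_eq_addBottom h1σ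
      have hcard : (downShift σ).card = k + 1 := by
        rw [← hσK, ← hcσ, card_addBottom hd, hcσ, Finset.card_erase_add_one hc]
      obtain ⟨d, hdm, rfl⟩ := exists_blockRank hd (hcard ▸ Finset.mem_range.mp hi)
      rw [insertIntoBlock_blockRank hd hdm] at heq
      exact singleton_notMem_addTop hd hdm (heq ▸ hH)
  · intro hnot
    refine absurd (mem_spFinset_iff.mpr ⟨hσp, ?_⟩) hnot
    rw [card_addBottom hρ, ← hτK, ← hτρ, card_addTop hρ]

/-- When the largest element is not a singleton block of the target `addTop (h + 1) ρ c`, the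
transition probability depends on `σ` only through whether `σ` is a predecessor, that is, `{1} ∉ σ`
and `downShift σ = ρ`. -/
lemma enrichedP_of_singleton_notMem {h k : ℕ} (x : ℕ → ℝ) {σ ρ : Finset (Finset ℕ)}
    {c : Finset ℕ} (hρ : IsPart h ρ) (hρK : ρ.card = k + 1) (hc : c ∈ ρ)
    (hσ : σ ∈ spFinset (h + 1) (k + 1)) :
    enrichedP h k x σ (addTop (h + 1) ρ c) =
      if {1} ∉ σ ∧ downShift σ = ρ then x (blockRank ρ c) else 0 := by
  obtain ⟨hσ', hσK⟩ := mem_spFinset_iff.mp hσ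
  have hd := isPart_downShift hσ'
  rw [enrichedP]
  by_cases h1 : {1} ∈ σ
  · have h2 : addTop (h + 1) ρ c ≠ insert {h + 1} (downShift σ) := fun heq =>
      singleton_notMem_addTop hρ hc (heq ▸ Finset.mem_insert_self _ _)
    rw [if_pos h1, if_neg h2, if_neg fun hh => hh.1 h1]
  rw [if_neg h1]
  obtain ⟨d, hdm, hdσ⟩ := hσ'.exists_eq_addBottom h1
  have hcard : (downShift σ).card = k + 1 := by
    rw [← hσK, ← hdσ, card_addBottom hd, hdσ, Finset.card_erase_add_one hdm]
  have key : ∀ i ∈ Finset.range (k + 1),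
      (addTop (h + 1) ρ c = insertIntoBlock (h + 1) i (downShift σ)) ↔
        (downShift σ = ρ ∧ i = blockRank ρ c) := by
    intro i hi
    constructor
    · intro heq
      obtain ⟨e, he, rfl⟩ := exists_blockRank hd (hcard ▸ Finset.mem_range.mp hi)
      rw [insertIntoBlock_blockRank hd he] at heq
      have hρσ : ρ = downShift σ := by
        rw [← trunc_addTop hρ (Or.inr hc), heq, trunc_addTop hd (Or.inr he)]
      refine ⟨hρσ.symm, ?_⟩
      rw [← hρσ] at heq he ⊢
      congr 1
      have h2 : insert (h + 1) e ∈ addTop (h + 1) ρ c := by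
        rw [heq]; exact Finset.mem_insert_self _ _
      have hnot : ∀ b ∈ ρ, h + 1 ∉ b := by
        intro b hb hh
        have := hρ.bound hb hh
        omega
      rw [addTop, Finset.mem_insert, Finset.mem_erase] at h2
      rcases h2 with h2 | h2
      · rw [← Finset.erase_insert (hnot e he), h2, Finset.erase_insert (hnot c hc)]
      · exact absurd (Finset.mem_insert_self _ _) (hnot _ h2.2)
    · rintro ⟨hρσ, rfl⟩
      rw [hρσ, insertIntoBlock_blockRank hρ hc]
  rw [Finset.sum_congr rfl fun i hi => if_congr (key i hi) rfl rfl]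
  by_cases hρσ : downShift σ = ρ
  · have hmem : blockRank ρ c ∈ Finset.range (k + 1) :=
      Finset.mem_range.mpr (hρK ▸ blockRank_lt hc)
    simp only [hρσ, true_and, h1, not_false_eq_true, if_true, Finset.sum_ite_eq', if_pos hmem]
  · simp [hρσ]

/-- When the largest element is not a singleton block of `τ`, the predecessors are the partitions
`addBottom ρ d` with `d ∈ ρ = trunc τ`, and the weights of their arches at 1 add up to 1. -/
lemma invariant_of_singleton_notMem {h k : ℕ} (x : ℕ → ℝ)
    (hsum : ∑ i ∈ Finset.range (k + 1), x i = 1) {τ : Finset (Finset ℕ)}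
    (hτ : τ ∈ spFinset (h + 1) (k + 1)) (hH : {h + 1} ∉ τ) :
    ∑ σ ∈ spFinset (h + 1) (k + 1), archWeight (h + 1) (k + 1) x σ * enrichedP h k x σ τ
      = archWeight (h + 1) (k + 1) x τ := by
  obtain ⟨hτp, hτK⟩ := mem_spFinset_iff.mp hτ
  obtain ⟨ρ, hρdef⟩ : ∃ ρ, ρ = trunc (h + 1) τ := ⟨_, rfl⟩
  have hρ : IsPart h ρ := hρdef ▸ isPart_trunc hτp
  obtain ⟨c, hc, rfl⟩ : ∃ c ∈ ρ, τ = addTop (h + 1) ρ c := by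
    obtain ⟨B, hB, hHB⟩ := (hτp.cover (h + 1)).mpr ⟨by omega, le_rfl⟩
    refine ⟨B.erase (h + 1), ?_, ?_⟩
    · rw [hρdef, mem_trunc]
      refine ⟨fun h0 => hH ?_, B, hB, rfl⟩
      have : B = {h + 1} := by
        rw [← Finset.insert_erase hHB, h0]
        rfl
      rwa [← this]
    · rw [hρdef, hτp.addTop_trunc hB hHB]
  have hρK : ρ.card = k + 1 := by
    rw [← hτK, card_addTop hρ, Finset.card_erase_add_one hc]
  have hbot : ∀ d ∈ ρ, addBottom ρ d ∈ spFinset (h + 1) (k + 1) := fun d hd =>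
    mem_spFinset_iff.mpr ⟨isPart_addBottom hρ (Or.inr hd),
      by rw [card_addBottom hρ, Finset.card_erase_add_one hd, hρK]⟩
  rw [Finset.sum_congr rfl fun σ hσ => by
    rw [enrichedP_of_singleton_notMem x hρ hρK hc hσ]]
  rw [← Finset.sum_subset (s₁ := ρ.image (addBottom ρ)), Finset.sum_image]
  · calc ∑ d ∈ ρ, archWeight (h + 1) (k + 1) x (addBottom ρ d) *
          (if {1} ∉ addBottom ρ d ∧ downShift (addBottom ρ d) = ρ
            then x (blockRank ρ c) else 0)
        = ∑ d ∈ ρ, x (ρ.filter fun b => mn d < mn b).card *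
            (x (blockRank ρ c) * archWeight h ρ.card x ρ) := by
          refine Finset.sum_congr rfl fun d hd => ?_
          rw [if_pos ⟨fun h1 => hρ.ne d hd (singleton_mem_addBottom hρ h1
            (hρ.zero_notMem (Or.inr hd))), downShift_addBottom hρ (Or.inr hd)⟩, ← hρK,
            archWeight_addBottom x hρ hd]
          ring
      _ = archWeight (h + 1) (k + 1) x (addTop (h + 1) ρ c) := by
          rw [← Finset.sum_mul, sum_card_mn_lt hρ, hρK, hsum, one_mul, ← hρK,
            archWeight_addTop x hρ hc hτp]
  · intro d hd e he hde
    exact addBottom_inj hρ hd he hde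
  · intro σ hσ
    obtain ⟨d, hd, rfl⟩ := Finset.mem_image.mp hσ
    exact hbot d hd
  · intro σ hσ hnot
    rw [if_neg, mul_zero]
    rintro ⟨h1, rfl⟩
    obtain ⟨d, hd, hdσ⟩ := (mem_spFinset_iff.mp hσ).1.exists_eq_addBottom h1
    exact hnot (Finset.mem_image.mpr ⟨d, hd, hdσ⟩)

/-- the measure `w̃(σ) = ∏_{(s,t) arch of σ} x_{K − C_σ(s,t)}` is
invariant for the enriched chain on `S(H,K)`, `H = h+1`, `K = k+1`. -/
theorem enriched_invariant (h k : ℕ) (hk : k ≤ h) (x : ℕ → ℝ)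
    (hx : ∀ i, 0 ≤ x i) (hsum : ∑ i ∈ Finset.range (k + 1), x i = 1) :
    ∀ τ ∈ spFinset (h + 1) (k + 1),
      ∑ σ ∈ spFinset (h + 1) (k + 1),
          archWeight (h + 1) (k + 1) x σ * enrichedP h k x σ τ
        = archWeight (h + 1) (k + 1) x τ := by
  intro τ hτ
  by_cases hH : {h + 1} ∈ τ
  · exact invariant_of_singleton_mem x hτ hH
  · exact invariant_of_singleton_notMem x hsum hτ hH
end
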